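/- arXiv:2401.09926 — 3 statements merged into one kernel-verified Lean document; each statement's English description precedes it below -/
import Mathlib

section
/- (Second-order convergence rate for smooth solutions.) Let N ≥ 1, σ ∈ (0,2), h > 0, T > 0, let F satisfy assumption (A1) with constant L_F > 0, and let τ > 0 satisfy τ·L_F·∑_{j≠0} κ_{σ,h,j} ≤ 1. Let f : ℝ^N × [0,T] → ℝ, and let u : ℝ^N × [0,T] → ℝ be bounded, four times continuously differentiable in x with all spatial derivatives up to order 4 bounded (uniformly in t), and twice continuously differentiable in t with bounded ∂²_t u, and suppose u solves the equation classically: ∂_t u(x,t) = F( (-(-Δ)^{σ/2} u(·,t))(x) ) + f(x,t) for all (x,t) ∈ ℝ^N × [0,T]. Let U be defined by the scheme U^0_i = u(hi, 0) and U^{n+1}_i = U^n_i + τ·[ F( ∑_{j≠0} (U^n_{i+j} − U^n_i) κ_{σ,h,j} ) + f(hi, nτ) ]. Then for every n with t_n = nτ ≤ T, sup_{i∈ℤ^N} |U^n_i − u(hi, t_n)| ≤ t_n·L_F·(N/10)·( M₄ + ((2−σ)/(2+σ))·c_N·M₀ )·h² + t_n·M_{tt}·τ, where M₄ = max_{1≤k≤N}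 sup_{(x,t)} |∂⁴_{x_k} u(x,t)|, M₀ = sup_{(x,t)} |u(x,t)|, M_{tt} = sup_{(x,t)} |∂²_t u(x,t)|, and c_N = ∑_{i=1}^N ∫_{ℝ^N} |∂⁴_{z_i} K_N(z,1)| dz. -/
/-!
The weights `κ` come from a random walk: `G(·, q)` is the transition probability of the
continuous-time simple random walk on `ℤ^N`, a product of Skellam laws (`walk_real`), just as the
heat kernel is a product of Gaussian laws (`heatSG_eq`). Hence the discrete operator and the
fractional Laplacian are both integrals `|Γ(-σ/2)|⁻¹ ∫ (S_t φ - φ) t^{-1-σ/2} dt`, with `S_t` the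
random walk semigroup on `h ℤ^N`, respectively the heat semigroup (`discrete_eq`), and the
truncation error is controlled by the difference of the two semigroups.

That difference is estimated in one dimension and transferred to `N` dimensions by exchanging one
coordinate at a time (`pi_compare`). In one dimension, interpolate between the two semigroups by
running heat flow up to time `s` and the random walk for the remaining time `t - s` (`mixed`). By
Taylor expansion the derivative in `s` is at most `h²/12` times the fourth derivative of the
heat flow at time `s` (`Chain.mixed_step`). For `s ≤ 1` this fourth derivative is at most `M`; for
`s > 1` it is at most `c1 M0 / s²` by integration by parts (`Chain.smoothing`), where `c1 ≤ c_N`.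
So the error at time `t` is at most `h²/12` times `M t` for `t ≤ 1`, and
`M + c1 M0 (1 - 1/t)` for `t > 1` (`Chain.compare`). Integrating against `t^{-1-σ/2}`
(`integral_profile`) and using `|Γ(-σ/2)| = 4 Γ(2 - σ/2) / (σ (2 - σ))` leaves the factor
`1 / (12 Γ(2 - σ/2))`, which is at most `1/10` because `Γ ≥ 5/6` on `[1, 2]`
(`five_sixths_le_Gamma`). This is `consistency`.

The convergence rate follows by induction on the time step. Since the weights are nonnegative and
`F` is nondecreasing and Lipschitz, the CFL condition makes the scheme monotone, so a step enlarges
the supremum of the error by at most `τ L_F` times the truncation error (`monotone_step`) plus the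
Taylor remainder in time (`euler_step`).
-/

open MeasureTheory Real Set

/-- Modified Bessel function of the first kind of integer order `m`. -/
noncomputable def besselI (m : ℕ) (s : ℝ) : ℝ :=
  ∑' k : ℕ, (s / 2) ^ (2 * k + m) / ((Nat.factorial k : ℝ) * (Nat.factorial (k + m)))

/-- `G(j,t) = e^{-2Nt} ∏_i I_{|j_i|}(2t)`. -/
noncomputable def G (N : ℕ) (j : Fin N → ℤ) (t : ℝ) : ℝ :=
  Real.exp (-(2 * (N : ℝ)) * t) * ∏ i, besselI (j i).natAbs (2 * t)

/-- The weight `κ_{σ,h,j} = h^{-σ} |Γ(-σ/2)|⁻¹ ∫_0^∞ G(j,t) t^{-1-σ/2} dt`. -/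
noncomputable def kappa (N : ℕ) (σ h : ℝ) (j : Fin N → ℤ) : ℝ :=
  h ^ (-σ) * |Real.Gamma (-σ / 2)|⁻¹ * ∫ t in Set.Ioi (0 : ℝ), G N j t * t ^ (-1 - σ / 2)

/-- The Gaussian heat kernel `K_N(y,t) = (4πt)^{-N/2} e^{-|y|²/(4t)}`. -/
noncomputable def heatKernel (N : ℕ) (y : Fin N → ℝ) (t : ℝ) : ℝ :=
  (4 * Real.pi * t) ^ (-(N : ℝ) / 2) * Real.exp (-(∑ i, (y i) ^ 2) / (4 * t))

/-- The heat semigroup `(e^{tΔ}φ)(x) = ∫ φ(x−y) K_N(y,t) dy`. -/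
noncomputable def heatSG (N : ℕ) (φ : (Fin N → ℝ) → ℝ) (t : ℝ) (x : Fin N → ℝ) : ℝ :=
  ∫ y : Fin N → ℝ, φ (x - y) * heatKernel N y t

/-- The fractional Laplacian
`(-(-Δ)^{σ/2}φ)(x) = |Γ(-σ/2)|⁻¹ ∫_0^∞ ((e^{tΔ}φ)(x) − φ(x)) t^{-1-σ/2} dt`. -/
noncomputable def fracLap (N : ℕ) (σ : ℝ) (φ : (Fin N → ℝ) → ℝ) (x : Fin N → ℝ) : ℝ :=
  |Real.Gamma (-σ / 2)|⁻¹ * ∫ t in Set.Ioi (0 : ℝ), (heatSG N φ t x - φ x) * t ^ (-1 - σ / 2)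

/-- `c_N = ∑_{i=1}^N ∫_{ℝ^N} |∂⁴_{z_i} K_N(z,1)| dz`. -/
noncomputable def cN (N : ℕ) : ℝ :=
  ∑ i : Fin N, ∫ z : Fin N → ℝ,
    |iteratedFDeriv ℝ 4 (fun y => heatKernel N y 1) z (fun _ => Pi.single i 1)|

/-- The grid point `h i ∈ ℝ^N`. -/
noncomputable def gridPt (N : ℕ) (h : ℝ) (i : Fin N → ℤ) : Fin N → ℝ :=
  fun k => h * (i k : ℝ)

/-! ### A lower bound for the Gamma function on `[1, 2]` -/

/-- The minimum of `Γ` on `[1, 2]` is about `0.8856`; the bound `5/6` is what turns the factor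
`1/12` of the second difference quotient into `1/10`. It follows from the convexity of `Γ` and its
tangent line at `3/2`, whose slope is `√π (1 - γ/2 - log 2)`. -/
lemma five_sixths_le_Gamma {s : ℝ} (h1 : 1 ≤ s) (h2 : s ≤ 2) : 5 / 6 ≤ Real.Gamma s := by
  set m : ℝ := √π * (1 - eulerMascheroniConstant / 2 - Real.log 2) with hm
  have hder : HasDerivAt Real.Gamma m (3 / 2) := by
    have h0 := Real.hasDerivAt_Gamma_one_half
    have hmul : HasDerivAt (fun x : ℝ => x * Real.Gamma x)
        (1 * Real.Gamma (1 / 2) + 1 / 2 * (-√π * (eulerMascheroniConstant + 2 * Real.log 2)))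
        (1 / 2) := (hasDerivAt_id' (1 / 2 : ℝ)).mul h0
    have hshift : HasDerivAt (fun y : ℝ => (y - 1) * Real.Gamma (y - 1))
        (1 * Real.Gamma (1 / 2) + 1 / 2 * (-√π * (eulerMascheroniConstant + 2 * Real.log 2)))
        (3 / 2) := by
      have : (3 / 2 : ℝ) - 1 = 1 / 2 := by norm_num
      exact HasDerivAt.comp_sub_const (3 / 2 : ℝ) 1 (by rw [this]; exact hmul)
    have hev : Real.Gamma =ᶠ[nhds (3 / 2 : ℝ)] fun y : ℝ => (y - 1) * Real.Gamma (y - 1) := by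
      filter_upwards [lt_mem_nhds (show (1 : ℝ) < 3 / 2 by norm_num)] with y hy
      have := Real.Gamma_add_one (s := y - 1) (by linarith)
      simpa using this
    refine (hshift.congr_of_eventuallyEq hev).congr_deriv ?_
    rw [Real.Gamma_one_half_eq, hm]; ring
  have hval : Real.Gamma (3 / 2) = √π / 2 := by
    have := Real.Gamma_add_one (s := 1 / 2) (by norm_num)
    rw [Real.Gamma_one_half_eq] at this
    norm_num at this ⊢
    linarith
  have htan : √π / 2 + m * (s - 3 / 2) ≤ Real.Gamma s := by
    have hconv := Real.convexOn_Gamma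
    rcases lt_trichotomy s (3 / 2) with hs | hs | hs
    · have := hconv.slope_le_of_hasDerivAt (x := s) (y := 3 / 2) (f' := m)
        (by simp; linarith) (by norm_num) hs hder
      rw [slope_def_field, div_le_iff₀ (by linarith)] at this
      rw [hval] at this; linarith
    · subst hs; rw [hval]; linarith
    · have := hconv.le_slope_of_hasDerivAt (x := 3 / 2) (y := s) (f' := m)
        (by norm_num) (by simp; linarith) hs hder
      rw [slope_def_field, le_div_iff₀ (by linarith)] at this
      rw [hval] at this; linarith
  have hpi : (1.772 : ℝ) ≤ √π := by
    apply Real.le_sqrt_of_sq_le; nlinarith [Real.pi_gt_d4]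
  have hpi2 : √π ≤ (1.773 : ℝ) := by
    apply Real.sqrt_le_iff.2; constructor <;> nlinarith [Real.pi_lt_d4]
  have hg1 := Real.one_half_lt_eulerMascheroniConstant
  have hg2 := Real.eulerMascheroniConstant_lt_two_thirds
  have hl1 := Real.log_two_gt_d9
  have hl2 := Real.log_two_lt_d9
  have hm1 : m ≤ 0.1009 := by rw [hm]; nlinarith
  have hm2 : -0.05 ≤ m := by rw [hm]; nlinarith
  rcases le_total s (3 / 2) with hs | hs <;> nlinarith

/-! ### Elementary calculus -/

/-- Telescoping over an equidistant partition removes the quadratic error. -/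
lemma abs_sub_le_of_quadratic_error {w g : ℝ → ℝ} {a b C : ℝ} (hab : a ≤ b)
    (H : ∀ x y, a ≤ x → x ≤ y → y ≤ b → |w y - w x| ≤ g y - g x + C * (y - x) ^ 2) :
    |w b - w a| ≤ g b - g a := by
  have key : ∀ n : ℕ, |w b - w a| ≤ g b - g a + C * (b - a) ^ 2 * (1 / ((n : ℝ) + 1)) := by
    intro n
    set d : ℝ := (b - a) / ((n : ℝ) + 1) with hd
    have hn : (0 : ℝ) < (n : ℝ) + 1 := by positivity
    have hd0 : 0 ≤ d := div_nonneg (by linarith) hn.le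
    have hdn : ((n : ℝ) + 1) * d = b - a := by rw [hd]; field_simp
    have step : ∀ k : ℕ, k ≤ n + 1 →
        |w (a + k * d) - w a| ≤ g (a + k * d) - g a + k * (C * d ^ 2) := by
      intro k
      induction k with
      | zero => intro _; simp
      | succ k ih =>
        intro hk
        have h1 := ih (by omega)
        have hk' : ((k : ℝ) + 1) ≤ (n : ℝ) + 1 := by exact_mod_cast hk
        have h2 := H (a + k * d) (a + (k + 1 : ℕ) * d) (by
          nlinarith [mul_nonneg (Nat.cast_nonneg k : (0:ℝ) ≤ k) hd0])
          (by push_cast; nlinarith) (by push_cast; nlinarith)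
        have h3 : a + ((k + 1 : ℕ) : ℝ) * d - (a + k * d) = d := by push_cast; ring
        rw [h3] at h2
        have h4 := abs_sub_le (w (a + (k + 1 : ℕ) * d)) (w (a + k * d)) (w a)
        push_cast at *
        linarith
    have h := step (n + 1) le_rfl
    have hb : a + ((n + 1 : ℕ) : ℝ) * d = b := by push_cast; linarith
    rw [hb] at h
    convert h using 2
    push_cast
    rw [hd]; field_simp
  have hlim : Filter.Tendsto (fun n : ℕ => g b - g a + C * (b - a) ^ 2 * (1 / ((n : ℝ) + 1)))
      Filter.atTop (nhds (g b - g a + C * (b - a) ^ 2 * 0)) :=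
    (tendsto_one_div_add_atTop_nhds_zero_nat.const_mul _).const_add _
  rw [mul_zero, add_zero] at hlim
  exact ge_of_tendsto' hlim key

/-- Integration of a monomial bound on the derivative. -/
lemma abs_le_of_abs_deriv_le {g g' : ℝ → ℝ} {c : ℝ} {n : ℕ}
    (hg : ∀ x, HasDerivAt g (g' x) x) (h0 : g 0 = 0)
    (hb : ∀ x, 0 ≤ x → |g' x| ≤ c * x ^ n) :
    ∀ x, 0 ≤ x → |g x| ≤ c / (n + 1) * x ^ (n + 1) := by
  intro x hx
  have hB : ∀ y : ℝ, HasDerivAt (fun y : ℝ => c / (n + 1) * y ^ (n + 1)) (c * y ^ n) y := by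
    intro y
    refine ((hasDerivAt_pow (n + 1) y).const_mul (c / ((n : ℝ) + 1))).congr_deriv ?_
    push_cast
    have : (n : ℝ) + 1 ≠ 0 := by positivity
    field_simp
  have := image_norm_le_of_norm_deriv_right_le_deriv_boundary (f := g) (f' := g') (a := 0) (b := x)
    (B := fun y : ℝ => c / (n + 1) * y ^ (n + 1)) (B' := fun y => c * y ^ n)
    (fun y _ => (hg y).continuousAt.continuousWithinAt)
    (fun y _ => (hg y).hasDerivWithinAt) (by simp [h0]) hB
    (fun y hy => by simpa using hb y hy.1)
  simpa using this (right_mem_Icc.2 hx)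

/-- A chain of successive derivatives `d 0, …, d 4`, all bounded by `C`, with `|d 0| ≤ M0` and
`|d 4| ≤ M`. This is how a function of class `C⁴` with bounded derivatives is handled in one
variable, since averages of chains are chains. -/
structure Chain (d : ℕ → ℝ → ℝ) (C M0 M : ℝ) : Prop where
  deriv : ∀ k < 4, ∀ x, HasDerivAt (d k) (d (k + 1) x) x
  cont : Continuous (d 4)
  bound : ∀ k ≤ 4, ∀ x, |d k x| ≤ C
  zero : ∀ x, |d 0 x| ≤ M0
  four : ∀ x, |d 4 x| ≤ M

lemma Chain.continuous {d : ℕ → ℝ → ℝ} {C M0 M : ℝ} (h : Chain d C M0 M) {k : ℕ} (hk : k ≤ 4) :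
    Continuous (d k) := by
  rcases hk.lt_or_eq with hk | rfl
  · exact continuous_iff_continuousAt.2 fun x => (h.deriv k hk x).continuousAt
  · exact h.cont

/-- Symmetric Taylor expansion of order four. -/
lemma Chain.taylor {d : ℕ → ℝ → ℝ} {C M0 M : ℝ} (h : Chain d C M0 M) (y x : ℝ) :
    |d 0 (y + x) + d 0 (y - x) - 2 * d 0 y - x ^ 2 * d 2 y| ≤ M / 12 * x ^ 4 := by
  -- four integrations from `0`, starting from the bound on the fourth derivative
  wlog hx : 0 ≤ x generalizing x
  · have := this (-x) (by linarith)
    rwa [sub_neg_eq_add, even_two.neg_pow, (by decide : Even 4).neg_pow, ← sub_eq_add_neg,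
      add_comm (d 0 (y - x))] at this
  have hp : ∀ k < 4, ∀ x, HasDerivAt (fun x => d k (y + x)) (d (k + 1) (y + x)) x :=
    fun k hk x => (h.deriv k hk (y + x)).comp_const_add y x
  have hm : ∀ k < 4, ∀ x, HasDerivAt (fun x => d k (y - x)) (-d (k + 1) (y - x)) x :=
    fun k hk x => (h.deriv k hk (y - x)).comp_const_sub y x
  have b3 : ∀ x, 0 ≤ x → |d 3 (y + x) - d 3 (y - x)| ≤ 2 * M / ((0 : ℕ) + 1) * x ^ (0 + 1) := by
    refine abs_le_of_abs_deriv_le (g' := fun x => d 4 (y + x) + d 4 (y - x)) (c := 2 * M) (n := 0)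
      (fun x => ?_) (by simp) fun x _ => ?_
    · exact ((hp 3 (by norm_num) x).sub (hm 3 (by norm_num) x)).congr_deriv (by ring)
    · have := abs_add_le (d 4 (y + x)) (d 4 (y - x))
      have := h.four (y + x); have := h.four (y - x)
      rw [pow_zero, mul_one]
      linarith
  have b2 := abs_le_of_abs_deriv_le (g := fun x => d 2 (y + x) + d 2 (y - x) - 2 * d 2 y)
    (g' := fun x => d 3 (y + x) - d 3 (y - x))
    (fun x => (((hp 2 (by norm_num) x).add (hm 2 (by norm_num) x)).sub_const _).congr_deriv
      (by ring)) (by simp; ring) b3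
  have b1 := abs_le_of_abs_deriv_le (g := fun x => d 1 (y + x) - d 1 (y - x) - 2 * x * d 2 y)
    (g' := fun x => d 2 (y + x) + d 2 (y - x) - 2 * d 2 y)
    (fun x => (((hp 1 (by norm_num) x).sub (hm 1 (by norm_num) x)).sub
      (((hasDerivAt_id' x).const_mul 2).mul_const (d 2 y))).congr_deriv
      (by ring)) (by simp) b2
  have b0 := abs_le_of_abs_deriv_le
    (g := fun x => d 0 (y + x) + d 0 (y - x) - 2 * d 0 y - x ^ 2 * d 2 y)
    (g' := fun x => d 1 (y + x) - d 1 (y - x) - 2 * x * d 2 y)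
    (fun x => ((((hp 0 (by norm_num) x).add (hm 0 (by norm_num) x)).sub_const _).sub
      ((hasDerivAt_pow 2 x).mul_const (d 2 y))).congr_deriv
      (by push_cast; ring)) (by simp; ring) b1 x hx
  refine b0.trans (le_of_eq ?_)
  push_cast
  ring

open ProbabilityTheory

/-! ### The one-dimensional laws -/

lemma integrable_of_bdd {α : Type*} [MeasurableSpace α] {μ : Measure α} [IsFiniteMeasure μ]
    {f : α → ℝ} (hf : AEStronglyMeasurable f μ) {C : ℝ} (hC : ∀ x, |f x| ≤ C) : Integrable f μ :=
  Integrable.of_bound hf C (Filter.Eventually.of_forall hC)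

lemma abs_integral_le_of_bdd {α : Type*} [MeasurableSpace α] {μ : Measure α}
    [IsProbabilityMeasure μ] {f : α → ℝ} {C : ℝ} (hC : ∀ x, |f x| ≤ C) : |∫ x, f x ∂μ| ≤ C := by
  have := norm_integral_le_of_norm_le_const (μ := μ) (f := f) (C := C)
    (Filter.Eventually.of_forall hC)
  simpa using this

/-- The law of `√(2s) Z` with `Z` standard normal; its density is the one-dimensional heat kernel
at time `s`. -/
noncomputable def gaussM (s : ℝ) : Measure ℝ := gaussianReal 0 (2 * s).toNNReal

instance (s : ℝ) : IsProbabilityMeasure (gaussM s) := by unfold gaussM; infer_instance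

/-- The law of `A - B` with `A`, `B` independent Poisson variables of rate `q` (the Skellam
distribution): the transition law of the continuous-time simple random walk on `ℤ`. -/
noncomputable def skellam (q : ℝ) : Measure ℤ :=
  ((poissonMeasure q.toNNReal).map (Nat.cast : ℕ → ℤ)) ∗
    ((poissonMeasure q.toNNReal).map fun n : ℕ => -(n : ℤ))

instance (q : ℝ) : IsProbabilityMeasure ((poissonMeasure q.toNNReal).map fun n : ℕ => -(n : ℤ)) :=
  Measure.isProbabilityMeasure_map .of_discrete

instance (q : ℝ) : IsProbabilityMeasure (skellam q) := by unfold skellam; infer_instance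

lemma gaussM_zero : gaussM 0 = Measure.dirac 0 := by simp [gaussM]

lemma gaussM_conv {s t : ℝ} (hs : 0 ≤ s) (ht : 0 ≤ t) : gaussM s ∗ gaussM t = gaussM (s + t) := by
  rw [gaussM, gaussM, gaussianReal_conv_gaussianReal, gaussM, add_zero, mul_add,
    Real.toNNReal_add (by positivity) (by positivity)]

lemma gaussM_neg (s : ℝ) : (gaussM s).map (fun x => -x) = gaussM s := by
  rw [gaussM, gaussianReal_map_neg, neg_zero]

lemma map_neg_poisson (q : ℝ) :
    ((poissonMeasure q.toNNReal).map (Nat.cast : ℕ → ℤ)).map (fun m : ℤ => -m) =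
      (poissonMeasure q.toNNReal).map fun n : ℕ => -(n : ℤ) :=
  Measure.map_map .of_discrete .of_discrete

lemma map_neg_conv (μ ν : Measure ℤ) [IsProbabilityMeasure μ] [IsProbabilityMeasure ν] :
    (μ ∗ ν).map (fun m => -m) = μ.map (fun m => -m) ∗ ν.map (fun m => -m) :=
  Measure.map_conv_addMonoidHom (negAddMonoidHom : ℤ →+ ℤ) .of_discrete

lemma skellam_conv {q r : ℝ} (hq : 0 ≤ q) (hr : 0 ≤ r) :
    skellam q ∗ skellam r = skellam (q + r) := by
  have h1 := map_cast_poissonMeasure_conv (R := ℤ) q.toNNReal r.toNNReal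
  have h2 : ((poissonMeasure q.toNNReal).map fun n : ℕ => -(n : ℤ)) ∗
      ((poissonMeasure r.toNNReal).map fun n : ℕ => -(n : ℤ)) =
      (poissonMeasure (q + r).toNNReal).map fun n : ℕ => -(n : ℤ) := by
    rw [← map_neg_poisson, ← map_neg_poisson, ← map_neg_poisson, ← map_neg_conv, h1,
      Real.toNNReal_add hq hr]
  unfold skellam
  rw [Measure.conv_assoc, ← Measure.conv_assoc _ _ (Measure.map (fun n : ℕ => -(n : ℤ)) _),
    Measure.conv_comm (Measure.map (fun n : ℕ => -(n : ℤ)) _) (Measure.map Nat.cast _),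
    Measure.conv_assoc, h2, ← Measure.conv_assoc, h1, Real.toNNReal_add hq hr]

lemma skellam_neg (q : ℝ) : (skellam q).map (fun m => -m) = skellam q := by
  have h : ((poissonMeasure q.toNNReal).map fun n : ℕ => -(n : ℤ)).map (fun m : ℤ => -m) =
      (poissonMeasure q.toNNReal).map (Nat.cast : ℕ → ℤ) := by
    rw [Measure.map_map .of_discrete .of_discrete]
    congr 1; ext n; simp
  unfold skellam
  rw [map_neg_conv, map_neg_poisson, h, Measure.conv_comm]

lemma integral_gaussM_add {s t : ℝ} (hs : 0 ≤ s) (ht : 0 ≤ t) {f : ℝ → ℝ} (hf : Continuous f)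
    {C : ℝ} (hC : ∀ x, |f x| ≤ C) :
    ∫ x, f x ∂gaussM (s + t) = ∫ x, ∫ y, f (x + y) ∂gaussM t ∂gaussM s := by
  rw [← gaussM_conv hs ht, integral_conv]
  exact integrable_of_bdd hf.aestronglyMeasurable hC

lemma integral_skellam_add {q r : ℝ} (hq : 0 ≤ q) (hr : 0 ≤ r) {f : ℤ → ℝ}
    {C : ℝ} (hC : ∀ x, |f x| ≤ C) :
    ∫ x, f x ∂skellam (q + r) = ∫ x, ∫ y, f (x + y) ∂skellam r ∂skellam q := by
  rw [← skellam_conv hq hr, integral_conv]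
  exact integrable_of_bdd .of_discrete hC

/-- The power series of the Bessel function, rewritten for the scaled argument. -/
lemma besselI_two_mul (m : ℕ) (q : ℝ) :
    besselI m (2 * q) = ∑' k : ℕ, q ^ (2 * k + m) / ((k.factorial : ℝ) * (k + m).factorial) := by
  unfold besselI
  simp

/-- The Skellam probabilities are given by Bessel functions: condition on the value of the
subtracted Poisson variable. -/
lemma skellam_nat {q : ℝ} (hq : 0 ≤ q) (n : ℕ) :
    (skellam q).real {(n : ℤ)} = Real.exp (-(2 * q)) * besselI n (2 * q) := by
  have h1 : (skellam q).real {(n : ℤ)} = ∫ m, Set.indicator {(n : ℤ)} 1 m ∂skellam q := by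
    rw [integral_indicator_one .of_discrete]
  have hb : ∀ m : ℤ, |Set.indicator {(n : ℤ)} (1 : ℤ → ℝ) m| ≤ 1 := by
    intro m; by_cases hm : m = n <;> simp [Set.indicator, hm]
  rw [h1, skellam, Measure.conv_comm, integral_conv (integrable_of_bdd .of_discrete hb),
    integral_map .of_discrete .of_discrete, integral_poissonMeasure, besselI_two_mul,
    ← tsum_mul_left]
  refine tsum_congr fun k => ?_
  have h2 : ∫ y, Set.indicator {(n : ℤ)} (1 : ℤ → ℝ) (-(k : ℤ) + y)
      ∂((poissonMeasure q.toNNReal).map (Nat.cast : ℕ → ℤ)) =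
      (poissonMeasure q.toNNReal).real {k + n} := by
    rw [integral_map .of_discrete .of_discrete, ← integral_indicator_one .of_discrete]
    refine integral_congr_ae (Filter.Eventually.of_forall fun a => ?_)
    have : (-(k : ℤ) + a = n) ↔ a = k + n := by omega
    simp [Set.indicator, this]
  rw [h2, poissonMeasure_real_singleton, Real.coe_toNNReal _ hq, smul_eq_mul]
  have : Real.exp (-(2 * q)) = Real.exp (-q) * Real.exp (-q) := by rw [← Real.exp_add]; ring_nf
  rw [this]
  field_simp
  ring

lemma skellam_singleton {q : ℝ} (hq : 0 ≤ q) (m : ℤ) :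
    (skellam q).real {m} = Real.exp (-(2 * q)) * besselI m.natAbs (2 * q) := by
  rcases Int.natAbs_eq m with h | h
  · rw [← skellam_nat hq, ← h]
  · have h3 : ((skellam q).map (fun m => -m)).real {(m.natAbs : ℤ)} =
        (skellam q).real {(m.natAbs : ℤ)} := by rw [skellam_neg]
    rw [map_measureReal_apply .of_discrete .of_discrete] at h3
    rw [← skellam_nat hq, ← h3]
    congr 1
    ext x
    simp only [mem_preimage, mem_singleton_iff]
    omega

lemma summable_besselI (m : ℕ) (q : ℝ) :
    Summable fun k : ℕ => q ^ (2 * k + m) / ((k.factorial : ℝ) * (k + m).factorial) := by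
  refine Summable.of_norm_bounded (g := fun k : ℕ => |q| ^ m * ((q ^ 2) ^ k / k.factorial))
    ((Real.summable_pow_div_factorial (q ^ 2)).mul_left _) fun k => ?_
  have h1 : (1 : ℝ) ≤ (k + m).factorial := by exact_mod_cast (k + m).factorial_pos
  have h2 : (0 : ℝ) < k.factorial := by positivity
  rw [norm_div, Real.norm_eq_abs, abs_pow, Real.norm_of_nonneg (by positivity), pow_add, pow_mul,
    sq_abs, mul_comm, ← mul_div_assoc]
  gcongr
  nlinarith

lemma le_besselI (m : ℕ) {q : ℝ} (hq : 0 ≤ q) : q ^ m / m.factorial ≤ besselI m (2 * q) := by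
  rw [besselI_two_mul]
  have := (summable_besselI m q).le_tsum 0 (fun k _ => by positivity)
  simpa using this

/-- Short-time expansion of the random walk: two or more jumps contribute `O(q²)`. -/
lemma skellam_expansion {q M : ℝ} (hq : 0 ≤ q) {f : ℤ → ℝ} (hf : ∀ m, |f m| ≤ M) :
    |∫ m, f m ∂skellam q - f 0 - q * (f 1 + f (-1) - 2 * f 0)| ≤ 12 * M * q ^ 2 := by
  have hM : 0 ≤ M := (abs_nonneg _).trans (hf 0)
  have he : 1 - 2 * q ≤ Real.exp (-(2 * q)) := by
    have := Real.add_one_le_exp (-(2 * q)); linarith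
  have hep := Real.exp_pos (-(2 * q))
  have a0 : 1 - 2 * q ≤ (skellam q).real {0} := by
    rw [skellam_singleton hq]
    have := le_besselI 0 hq
    simp at this ⊢
    nlinarith
  have a1 : q - 2 * q ^ 2 ≤ (skellam q).real {1} := by
    rw [skellam_singleton hq]
    have := le_besselI 1 hq
    simp at this ⊢
    nlinarith [mul_le_mul_of_nonneg_left this hep.le]
  have a2 : q - 2 * q ^ 2 ≤ (skellam q).real {-1} := by
    rw [skellam_singleton hq]
    have := le_besselI 1 hq
    simp at this ⊢
    nlinarith [mul_le_mul_of_nonneg_left this hep.le]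
  set S : Finset ℤ := {0, 1, -1} with hS
  have hsum : (skellam q).real (S : Set ℤ) =
      (skellam q).real {0} + (skellam q).real {1} + (skellam q).real {-1} := by
    rw [← sum_measureReal_singleton]
    simp [hS, add_assoc]
  have hcompl : (skellam q).real (S : Set ℤ)ᶜ = 1 - (skellam q).real (S : Set ℤ) :=
    probReal_compl_eq_one_sub .of_discrete
  have hcn : 0 ≤ (skellam q).real (S : Set ℤ)ᶜ := measureReal_nonneg
  have hInt : Integrable f (skellam q) := integrable_of_bdd .of_discrete hf
  have hsplit := integral_add_compl (μ := skellam q) (s := (S : Set ℤ)) .of_discrete hInt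
  have hI : ∫ m in (S : Set ℤ), f m ∂skellam q = (skellam q).real {0} * f 0 +
      (skellam q).real {1} * f 1 + (skellam q).real {-1} * f (-1) := by
    rw [setIntegral_finset S hInt.integrableOn]
    simp [hS, add_assoc]
  have hR : |∫ m in (S : Set ℤ)ᶜ, f m ∂skellam q| ≤ M * (skellam q).real (S : Set ℤ)ᶜ := by
    have := norm_setIntegral_le_of_norm_le_const (μ := skellam q) (s := (S : Set ℤ)ᶜ) (f := f)
      (C := M) (measure_lt_top _ _) (fun x _ => hf x)
    simpa using this
  set R := ∫ m in (S : Set ℤ)ᶜ, f m ∂skellam q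
  set p0 := (skellam q).real {0}
  set p1 := (skellam q).real {1}
  set p2 := (skellam q).real {-1}
  rw [← hsplit, hI]
  rw [hcompl, hsum] at hR hcn
  have e0 : |p0 - (1 - 2 * q)| ≤ 4 * q ^ 2 := abs_le.2 ⟨by nlinarith, by nlinarith⟩
  have e1 : |p1 - q| ≤ 2 * q ^ 2 := abs_le.2 ⟨by nlinarith, by nlinarith⟩
  have e2 : |p2 - q| ≤ 2 * q ^ 2 := abs_le.2 ⟨by nlinarith, by nlinarith⟩
  have eR : |R| ≤ 4 * q ^ 2 * M := hR.trans (by nlinarith)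
  have key : p0 * f 0 + p1 * f 1 + p2 * f (-1) + R - f 0 - q * (f 1 + f (-1) - 2 * f 0) =
      (p0 - (1 - 2 * q)) * f 0 + (p1 - q) * f 1 + (p2 - q) * f (-1) + R := by ring
  rw [key]
  have m0 : |(p0 - (1 - 2 * q)) * f 0| ≤ 4 * q ^ 2 * M := by
    rw [abs_mul]; exact mul_le_mul e0 (hf _) (abs_nonneg _) (by positivity)
  have m1 : |(p1 - q) * f 1| ≤ 2 * q ^ 2 * M := by
    rw [abs_mul]; exact mul_le_mul e1 (hf _) (abs_nonneg _) (by positivity)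
  have m2 : |(p2 - q) * f (-1)| ≤ 2 * q ^ 2 * M := by
    rw [abs_mul]; exact mul_le_mul e2 (hf _) (abs_nonneg _) (by positivity)
  have := abs_add_le ((p0 - (1 - 2 * q)) * f 0 + (p1 - q) * f 1 + (p2 - q) * f (-1)) R
  have := abs_add_le ((p0 - (1 - 2 * q)) * f 0 + (p1 - q) * f 1) ((p2 - q) * f (-1))
  have := abs_add_le ((p0 - (1 - 2 * q)) * f 0) ((p1 - q) * f 1)
  linarith

/-! ### Gaussian averages: short-time expansion and smoothing -/

lemma Chain.integrable_shift {d : ℕ → ℝ → ℝ} {C M0 M : ℝ} (h : Chain d C M0 M) {k : ℕ}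
    (hk : k ≤ 4) (y : ℝ) (μ : Measure ℝ) [IsProbabilityMeasure μ] :
    Integrable (fun z => d k (y + z)) μ :=
  integrable_of_bdd ((h.continuous hk).comp (by fun_prop)).aestronglyMeasurable
    fun _ => h.bound k hk _

/-- Averaging over translations preserves the chain and all its bounds. -/
lemma Chain.average {d : ℕ → ℝ → ℝ} {C M0 M : ℝ} (h : Chain d C M0 M) (μ : Measure ℝ)
    [IsProbabilityMeasure μ] : Chain (fun k y => ∫ z, d k (y + z) ∂μ) C M0 M where
  deriv k hk x := by
    refine (hasDerivAt_integral_of_dominated_loc_of_deriv_le (F := fun x z => d k (x + z))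
      (F' := fun x z => d (k + 1) (x + z)) (bound := fun _ => C) Filter.univ_mem
      (Filter.Eventually.of_forall fun x => ((h.continuous hk.le).comp
        (by fun_prop)).aestronglyMeasurable)
      (h.integrable_shift hk.le x μ)
      (h.integrable_shift hk x μ).aestronglyMeasurable
      (Filter.Eventually.of_forall fun z x _ => h.bound (k + 1) hk _) (integrable_const C)
      (Filter.Eventually.of_forall fun z x _ => (h.deriv k hk (x + z)).comp_add_const x z)).2
  cont := by
    refine continuous_of_dominated (bound := fun _ => C)
      (fun x => (h.integrable_shift le_rfl x μ).aestronglyMeasurable)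
      (fun x => Filter.Eventually.of_forall fun z => h.bound 4 le_rfl _) (integrable_const C)
      (Filter.Eventually.of_forall fun z => h.cont.comp (by fun_prop))
  bound k hk x := abs_integral_le_of_bdd fun z => h.bound k hk _
  zero x := abs_integral_le_of_bdd fun z => h.zero _
  four x := abs_integral_le_of_bdd fun z => h.four _

lemma gaussM_scale {s : ℝ} (hs : 0 ≤ s) : (gaussM 1).map (fun z => √s * z) = gaussM s := by
  unfold gaussM
  rw [gaussianReal_map_const_mul, mul_zero]
  congr 1
  ext
  simp [Real.sq_sqrt hs, hs, mul_comm]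

/-- Fourth moment of the Gaussian law with variance `2`. -/
noncomputable def gaussK : ℝ := ∫ z, z ^ 4 ∂gaussM 1

lemma integrable_pow_gaussM (s : ℝ) (n : ℕ) : Integrable (fun z => z ^ n) (gaussM s) := by
  have := (memLp_id_gaussianReal (μ := 0) (v := (2 * s).toNNReal) n).integrable_norm_pow'
  refine (integrable_norm_iff (by fun_prop)).1 ?_
  simpa [gaussM] using this

lemma gaussM_fourth {s : ℝ} (hs : 0 ≤ s) : ∫ z, z ^ 4 ∂gaussM s = gaussK * s ^ 2 := by
  rw [← gaussM_scale hs, integral_map (by fun_prop) (by fun_prop), gaussK, ← integral_mul_const]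
  refine integral_congr_ae (Filter.Eventually.of_forall fun z => ?_)
  have : (√s) ^ 4 = s ^ 2 := by
    rw [show (4 : ℕ) = 2 * 2 from rfl, pow_mul, Real.sq_sqrt hs]
  simp only [mul_pow, this]; ring

lemma gaussM_second {s : ℝ} (hs : 0 ≤ s) : ∫ z, z ^ 2 ∂gaussM s = 2 * s := by
  have h := variance_fun_id_gaussianReal (μ := 0) (v := (2 * s).toNNReal)
  rw [variance_eq_integral (by fun_prop)] at h
  simpa [gaussM, hs] using h

lemma integral_gaussM_neg (s : ℝ) {f : ℝ → ℝ} (hf : Continuous f) :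
    ∫ z, f (-z) ∂gaussM s = ∫ z, f z ∂gaussM s := by
  conv_rhs => rw [← gaussM_neg s]
  rw [integral_map (by fun_prop) hf.aestronglyMeasurable]

/-- Short-time expansion of the heat flow, from the Taylor expansion and the symmetry of the
Gaussian law. -/
lemma Chain.gauss_expansion {d : ℕ → ℝ → ℝ} {C M0 M : ℝ} (h : Chain d C M0 M) {s : ℝ}
    (hs : 0 ≤ s) (y : ℝ) :
    |∫ z, d 0 (y + z) ∂gaussM s - d 0 y - s * d 2 y| ≤ M / 24 * gaussK * s ^ 2 := by
  have hc : Continuous (d 0) := h.continuous (by norm_num)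
  have i1 := h.integrable_shift (k := 0) (by norm_num) y (gaussM s)
  have hneg := integral_gaussM_neg s (f := fun z => d 0 (y + z)) (by fun_prop)
  have i2 : Integrable (fun z => d 0 (y - z)) (gaussM s) :=
    integrable_of_bdd (by fun_prop) fun _ => h.bound 0 (by norm_num) _
  simp only [← sub_eq_add_neg] at hneg
  have i3 : Integrable (fun z => d 0 (y + z) + d 0 (y - z)) (gaussM s) := i1.add i2
  have i4 : Integrable (fun z => d 0 (y + z) + d 0 (y - z) - 2 * d 0 y) (gaussM s) :=
    i3.sub (integrable_const _)
  have i5 : Integrable (fun z => z ^ 2 * d 2 y) (gaussM s) :=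
    (integrable_pow_gaussM s 2).mul_const _
  have e : ∫ z, (d 0 (y + z) + d 0 (y - z) - 2 * d 0 y - z ^ 2 * d 2 y) ∂gaussM s =
      2 * (∫ z, d 0 (y + z) ∂gaussM s - d 0 y - s * d 2 y) := by
    rw [integral_sub i4 i5, integral_sub i3 (integrable_const _), integral_add i1 i2, hneg,
      integral_mul_const (d 2 y) (fun z : ℝ => z ^ 2), gaussM_second hs]
    simp
    ring
  have hb : |∫ z, (d 0 (y + z) + d 0 (y - z) - 2 * d 0 y - z ^ 2 * d 2 y) ∂gaussM s| ≤
      ∫ z, M / 12 * z ^ 4 ∂gaussM s := by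
    refine (abs_integral_le_integral_abs).trans (integral_mono (i4.sub i5).abs
      ((integrable_pow_gaussM s 4).const_mul _) fun z => h.taylor y z)
  rw [e, integral_const_mul, gaussM_fourth hs, abs_mul, abs_two] at hb
  linarith

/-- The derivatives of the one-dimensional heat kernel at time `1`, up to order four. -/
noncomputable def kerD : ℕ → ℝ → ℝ
  | 0, x => gaussianPDFReal 0 2 x
  | 1, x => (-x / 2) * gaussianPDFReal 0 2 x
  | 2, x => (x ^ 2 / 4 - 1 / 2) * gaussianPDFReal 0 2 x
  | 3, x => (-x ^ 3 / 8 + 3 * x / 4) * gaussianPDFReal 0 2 x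
  | _, x => (x ^ 4 / 16 - 3 * x ^ 2 / 4 + 3 / 4) * gaussianPDFReal 0 2 x

lemma hasDerivAt_gaussianPDFReal (x : ℝ) :
    HasDerivAt (gaussianPDFReal 0 2) ((-x / 2) * gaussianPDFReal 0 2 x) x := by
  unfold gaussianPDFReal
  have h1 : HasDerivAt (fun x : ℝ => -(x - 0) ^ 2 / (2 * ((2 : NNReal) : ℝ))) (-x / 2) x := by
    have := (((hasDerivAt_id' x).sub_const 0).pow 2).neg.div_const (2 * ((2 : NNReal) : ℝ))
    refine this.congr_deriv ?_
    push_cast; simp; ring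
  refine (h1.exp.const_mul _).congr_deriv ?_
  ring

lemma hasDerivAt_kerD {k : ℕ} (hk : k < 4) (x : ℝ) : HasDerivAt (kerD k) (kerD (k + 1) x) x := by
  have h0 := hasDerivAt_gaussianPDFReal x
  have hx := hasDerivAt_id' x
  interval_cases k
  · exact h0
  · refine ((hx.neg.div_const 2).mul h0).congr_deriv ?_
    simp only [kerD, Pi.neg_apply]; ring
  · refine ((((hx.pow 2).div_const 4).sub_const (1 / 2)).mul h0).congr_deriv ?_
    simp only [kerD, Pi.neg_apply, Pi.pow_apply, Pi.add_apply]; push_cast; ring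
  · refine ((((hx.pow 3).neg.div_const 8).add ((hx.const_mul 3).div_const 4)).mul
      h0).congr_deriv ?_
    simp only [kerD, Pi.neg_apply, Pi.pow_apply, Pi.add_apply]; push_cast; ring

lemma integrable_kerD {k : ℕ} (hk : k ≤ 4) : Integrable (kerD k) := by
  have hp : ∀ n : ℕ, Integrable fun x : ℝ => x ^ n * gaussianPDFReal 0 2 x := by
    intro n
    have := integrable_rpow_mul_exp_neg_mul_sq (b := 1 / 4) (by norm_num) (s := n)
      (by have : (0 : ℝ) ≤ n := Nat.cast_nonneg n
          linarith)
    simp only [Real.rpow_natCast] at this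
    refine (this.mul_const (√(2 * π * (2 : NNReal)))⁻¹).congr
      (Filter.Eventually.of_forall fun x => ?_)
    simp only [gaussianPDFReal]
    have : -(1 / 4) * x ^ 2 = -(x - 0) ^ 2 / (2 * ((2 : NNReal) : ℝ)) := by
      push_cast; ring
    rw [this]; ring
  interval_cases k
  · refine (hp 0).congr (Filter.Eventually.of_forall fun x => ?_)
    simp [kerD]
  · refine ((hp 1).const_mul (-1 / 2)).congr (Filter.Eventually.of_forall fun x => ?_)
    simp only [kerD]; ring
  · refine (((hp 2).const_mul (1 / 4)).sub ((hp 0).const_mul (1 / 2))).congr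
      (Filter.Eventually.of_forall fun x => ?_)
    simp only [kerD, Pi.sub_apply]; ring
  · refine (((hp 3).const_mul (-1 / 8)).add ((hp 1).const_mul (3 / 4))).congr
      (Filter.Eventually.of_forall fun x => ?_)
    simp only [kerD, Pi.add_apply]; ring
  · refine ((((hp 4).const_mul (1 / 16)).sub ((hp 2).const_mul (3 / 4))).add
      ((hp 0).const_mul (3 / 4))).congr (Filter.Eventually.of_forall fun x => ?_)
    simp only [kerD, Pi.add_apply, Pi.sub_apply]; ring

/-- The `L¹` norm of the fourth derivative of the one-dimensional heat kernel at time `1`. -/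
noncomputable def c1 : ℝ := ∫ z, |kerD 4 z|

lemma c1_nonneg : 0 ≤ c1 := integral_nonneg fun _ => abs_nonneg _

lemma iteratedDeriv_gaussianPDFReal : iteratedDeriv 4 (gaussianPDFReal 0 2) = kerD 4 := by
  have hd : ∀ k < 4, deriv (kerD k) = kerD (k + 1) := fun k hk =>
    funext fun x => (hasDerivAt_kerD hk x).deriv
  have h0 : gaussianPDFReal 0 2 = kerD 0 := rfl
  rw [h0, iteratedDeriv_succ', hd 0 (by norm_num), iteratedDeriv_succ', hd 1 (by norm_num),
    iteratedDeriv_succ', hd 2 (by norm_num), iteratedDeriv_succ', hd 3 (by norm_num),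
    iteratedDeriv_zero]

/-- Integration by parts moves all four derivatives onto the heat kernel. -/
lemma Chain.smoothing {d : ℕ → ℝ → ℝ} {C M0 M : ℝ} (h : Chain d C M0 M) {s : ℝ} (hs : 0 < s)
    (y : ℝ) : |∫ z, d 4 (y + z) ∂gaussM s| ≤ c1 * M0 / s ^ 2 := by
  set a : ℝ := √s with ha
  have ha4 : a ^ 4 = s ^ 2 := by
    rw [show (4 : ℕ) = 2 * 2 from rfl, pow_mul, ha, Real.sq_sqrt hs.le]
  have hcont : ∀ k ≤ 4, Continuous fun z => d k (y + a * z) := fun k hk =>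
    (h.continuous hk).comp (by fun_prop)
  have hInt : ∀ k ≤ 4, ∀ j ≤ 4, Integrable fun z => d k (y + a * z) * kerD j z := fun k hk j hj =>
    (integrable_kerD hj).bdd_mul (c := C) (hcont k hk).aestronglyMeasurable
      (Filter.Eventually.of_forall fun z => h.bound k hk _)
  have ibp : ∀ k < 4, ∀ j < 4, ∫ z, d k (y + a * z) * kerD (j + 1) z =
      -(a * ∫ z, d (k + 1) (y + a * z) * kerD j z) := by
    intro k hk j hj
    have hder : ∀ z, HasDerivAt (fun z => d k (y + a * z)) (a * d (k + 1) (y + a * z)) z := by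
      intro z
      have h1 : HasDerivAt (fun z : ℝ => y + a * z) a z := by
        simpa using ((hasDerivAt_id' z).const_mul a).const_add y
      refine ((h.deriv k hk (y + a * z)).comp z h1).congr_deriv (by ring)
    rw [integral_mul_deriv_eq_deriv_mul_of_integrable (u' := fun z => a * d (k + 1) (y + a * z))
      (v := kerD j) (fun z _ => hder z) (fun z _ => hasDerivAt_kerD hj z)
      (hInt k hk.le (j + 1) hj) ?_ (hInt k hk.le j hj.le), ← integral_const_mul]
    · simp only [mul_assoc]
    · have := (hInt (k + 1) hk j hj.le).const_mul a
      refine this.congr (Filter.Eventually.of_forall fun z => ?_)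
      simp only [Pi.mul_apply]; ring
  have e1 : ∫ z, d 4 (y + z) ∂gaussM s = ∫ z, d 4 (y + a * z) * kerD 0 z := by
    rw [← gaussM_scale hs.le, integral_map (by fun_prop)
      (by rw [gaussM_scale hs.le]; exact ((h.continuous le_rfl).comp
            (by fun_prop)).aestronglyMeasurable)]
    have : gaussM 1 = gaussianReal 0 2 := by
      unfold gaussM; congr 1; ext; simp
    rw [this, integral_gaussianReal_eq_integral_smul (by norm_num)]
    refine integral_congr_ae (Filter.Eventually.of_forall fun z => ?_)
    simp only [kerD, smul_eq_mul]
    rw [mul_comm]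
  have e2 : a ^ 4 * ∫ z, d 4 (y + a * z) * kerD 0 z = ∫ z, d 0 (y + a * z) * kerD 4 z := by
    rw [ibp 0 (by norm_num) 3 (by norm_num), ibp 1 (by norm_num) 2 (by norm_num),
      ibp 2 (by norm_num) 1 (by norm_num), ibp 3 (by norm_num) 0 (by norm_num)]
    ring
  have h5 : |∫ z, d 4 (y + a * z) * kerD 0 z| * a ^ 4 = |∫ z, d 0 (y + a * z) * kerD 4 z| := by
    rw [← e2, abs_mul, abs_of_nonneg (by positivity : 0 ≤ a ^ 4), mul_comm]
  rw [e1, le_div_iff₀ (by positivity), ← ha4, h5, c1, ← integral_mul_const]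
  refine (abs_integral_le_integral_abs).trans (integral_mono (hInt 0 (by norm_num) 4 le_rfl).abs
    ((integrable_kerD le_rfl).abs.mul_const _) fun z => ?_)
  simp only [abs_mul]
  rw [mul_comm]
  exact mul_le_mul_of_nonneg_left (h.zero _) (abs_nonneg _)

/-! ### Comparison of the heat semigroup and the random walk in one dimension -/

/-- One small time step: heat flow and random walk both act as `f ↦ f + δ f''`, up to the
consistency error `δ h² f'''' / 12` of the second difference and a quadratic remainder. -/
lemma Chain.one_step {d : ℕ → ℝ → ℝ} {C M0 M : ℝ} (hd : Chain d C M0 M) {h δ m : ℝ} (hh : 0 < h)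
    (hδ : 0 ≤ δ) (hm : ∀ x, |d 4 x| ≤ m) (y : ℝ) :
    |∫ z, d 0 (y + z) ∂gaussM δ - ∫ k : ℤ, d 0 (y + h * k) ∂skellam (δ / h ^ 2)| ≤
      δ * (h ^ 2 / 12) * m + (M / 24 * gaussK + 12 * M0 / h ^ 4) * δ ^ 2 := by
  have h1 := hd.gauss_expansion hδ y
  have h2 := skellam_expansion (q := δ / h ^ 2) (by positivity) (f := fun k : ℤ => d 0 (y + h * k))
    (M := M0) fun k => hd.zero _
  have h3 := Chain.taylor (M := m) ⟨hd.deriv, hd.cont, hd.bound, hd.zero, hm⟩ y h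
  simp only [Int.cast_zero, mul_zero, add_zero, Int.cast_one, mul_one, Int.cast_neg, mul_neg,
    ← sub_eq_add_neg] at h2
  set A := ∫ z, d 0 (y + z) ∂gaussM δ
  set B := ∫ k : ℤ, d 0 (y + h * k) ∂skellam (δ / h ^ 2)
  set D := d 0 (y + h) + d 0 (y - h) - 2 * d 0 y
  have h4 : |δ / h ^ 2 * (D - h ^ 2 * d 2 y)| ≤ δ / h ^ 2 * (m / 12 * h ^ 4) := by
    rw [abs_mul, abs_of_nonneg (by positivity)]
    exact mul_le_mul_of_nonneg_left h3 (by positivity)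
  have e : A - B = (A - d 0 y - δ * d 2 y) - (B - d 0 y - δ / h ^ 2 * D) -
      δ / h ^ 2 * (D - h ^ 2 * d 2 y) := by
    field_simp; ring
  have h5 := abs_sub (A - d 0 y - δ * d 2 y) (B - d 0 y - δ / h ^ 2 * D)
  have h6 := abs_sub (A - d 0 y - δ * d 2 y - (B - d 0 y - δ / h ^ 2 * D))
    (δ / h ^ 2 * (D - h ^ 2 * d 2 y))
  rw [e]
  refine h6.trans ((add_le_add (h5.trans (add_le_add h1 h2)) h4).trans (le_of_eq ?_))
  field_simp; ring

/-- Heat flow up to time `s`, followed by the random walk for the remaining time `t - s`. -/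
noncomputable def mixed (f : ℝ → ℝ) (h t y s : ℝ) : ℝ :=
  ∫ k : ℤ, ∫ z, f (y + h * k + z) ∂gaussM s ∂skellam ((t - s) / h ^ 2)

/-- Trading a piece `b - a` of random walk time for heat flow time changes `mixed` by at most the
one-step error of the function already smoothed by the heat flow up to time `a`; `m` bounds the
fourth derivative of that smoothed function. -/
lemma Chain.mixed_step {d : ℕ → ℝ → ℝ} {C M0 M : ℝ} (hd : Chain d C M0 M) {h t a b m : ℝ}
    (hh : 0 < h) (ha : 0 ≤ a) (hab : a ≤ b) (hbt : b ≤ t)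
    (hm : ∀ x, |∫ z, d 4 (x + z) ∂gaussM a| ≤ m) (y : ℝ) :
    |mixed (d 0) h t y b - mixed (d 0) h t y a| ≤
      (b - a) * (h ^ 2 / 12) * m + (M / 24 * gaussK + 12 * M0 / h ^ 4) * (b - a) ^ 2 := by
  set δ := b - a with hδ
  have hδ0 : 0 ≤ δ := by linarith
  have hc : Continuous (d 0) := hd.continuous (by norm_num)
  have hV := hd.average (gaussM a)
  set V : ℕ → ℝ → ℝ := fun k y => ∫ z, d k (y + z) ∂gaussM a with hVdef
  have eb : mixed (d 0) h t y b =
      ∫ k : ℤ, ∫ z, V 0 (y + h * k + z) ∂gaussM δ ∂skellam ((t - b) / h ^ 2) := by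
    unfold mixed
    congr 1; ext k
    rw [show b = δ + a by rw [hδ]; ring, integral_gaussM_add hδ0 ha (by fun_prop)
      (fun x => hd.zero _)]
    simp only [hVdef, add_assoc]
  have ea : mixed (d 0) h t y a =
      ∫ k : ℤ, ∫ l : ℤ, V 0 (y + h * k + h * l) ∂skellam (δ / h ^ 2)
        ∂skellam ((t - b) / h ^ 2) := by
    unfold mixed
    rw [show (t - a) / h ^ 2 = (t - b) / h ^ 2 + δ / h ^ 2 by rw [hδ]; ring,
      integral_skellam_add (div_nonneg (by linarith) (by positivity)) (by positivity)
        (C := M0) (fun k => hV.zero _)]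
    congr 1; ext k; congr 1; ext l
    simp only [hVdef]
    push_cast
    rw [mul_add, ← add_assoc]
  have i1 : Integrable (fun k : ℤ => ∫ z, V 0 (y + h * k + z) ∂gaussM δ)
      (skellam ((t - b) / h ^ 2)) :=
    integrable_of_bdd .of_discrete (C := M0) fun k => abs_integral_le_of_bdd fun z => hV.zero _
  have i2 : Integrable (fun k : ℤ => ∫ l : ℤ, V 0 (y + h * k + h * l) ∂skellam (δ / h ^ 2))
      (skellam ((t - b) / h ^ 2)) :=
    integrable_of_bdd .of_discrete (C := M0) fun k => abs_integral_le_of_bdd fun z => hV.zero _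
  rw [eb, ea, ← integral_sub i1 i2]
  exact abs_integral_le_of_bdd fun k => hV.one_step hh hδ0 hm _

lemma Chain.nonneg {d : ℕ → ℝ → ℝ} {C M0 M : ℝ} (hd : Chain d C M0 M) : 0 ≤ M0 ∧ 0 ≤ M :=
  ⟨(abs_nonneg _).trans (hd.zero 0), (abs_nonneg _).trans (hd.four 0)⟩

/-- The time profile of the error between heat flow and random walk. -/
noncomputable def profile (M0 M t : ℝ) : ℝ :=
  if t ≤ 1 then M * t else M + c1 * M0 * (1 - 1 / t)

/-- Up to time `1` the bound on the fourth derivative is used, afterwards the smoothing effect of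
the heat flow, which makes the error bounded in time. -/
lemma Chain.compare {d : ℕ → ℝ → ℝ} {C M0 M : ℝ} (hd : Chain d C M0 M) {h t : ℝ} (hh : 0 < h)
    (ht : 0 ≤ t) (y : ℝ) :
    |∫ z, d 0 (y + z) ∂gaussM t - ∫ k : ℤ, d 0 (y + h * k) ∂skellam (t / h ^ 2)| ≤
      h ^ 2 / 12 * profile M0 M t := by
  obtain ⟨hM0, hM⟩ := hd.nonneg
  have hc1 := c1_nonneg
  have e0 : mixed (d 0) h t y 0 = ∫ k : ℤ, d 0 (y + h * k) ∂skellam (t / h ^ 2) := by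
    unfold mixed
    simp [gaussM_zero]
  have et : mixed (d 0) h t y t = ∫ z, d 0 (y + z) ∂gaussM t := by
    have h0 := skellam_expansion (q := 0) le_rfl
      (f := fun k : ℤ => ∫ z, d 0 (y + h * k + z) ∂gaussM t) (M := M0)
      fun k => abs_integral_le_of_bdd fun _ => hd.zero _
    unfold mixed
    simpa [sub_eq_zero] using h0
  have early : ∀ b, 0 ≤ b → b ≤ t →
      |mixed (d 0) h t y b - mixed (d 0) h t y 0| ≤ h ^ 2 / 12 * M * b - h ^ 2 / 12 * M * 0 := by
    intro b hb hbt
    refine abs_sub_le_of_quadratic_error (g := fun b => h ^ 2 / 12 * M * b)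
      (C := M / 24 * gaussK + 12 * M0 / h ^ 4) hb fun x x' hx hxx hx' => ?_
    refine (hd.mixed_step hh hx hxx (hx'.trans hbt)
      (fun z => abs_integral_le_of_bdd fun _ => hd.four _) y).trans (le_of_eq ?_)
    ring
  rw [← e0, ← et, profile]
  split_ifs with h1
  · refine (early t ht le_rfl).trans (le_of_eq ?_)
    ring
  · have h1' : 1 ≤ t := by linarith
    have hE := early 1 zero_le_one h1'
    have late : |mixed (d 0) h t y t - mixed (d 0) h t y 1| ≤
        -(h ^ 2 / 12 * (c1 * M0) / t) - -(h ^ 2 / 12 * (c1 * M0) / 1) := by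
      refine abs_sub_le_of_quadratic_error (g := fun b => -(h ^ 2 / 12 * (c1 * M0) / b))
        (C := M / 24 * gaussK + 12 * M0 / h ^ 4 + h ^ 2 / 12 * (c1 * M0)) h1'
        fun x x' hx hxx hx' => ?_
      have hx0 : 0 < x := by linarith
      have hx0' : 0 < x' := by linarith
      refine (hd.mixed_step hh hx0.le hxx hx' (fun z => hd.smoothing hx0 z) y).trans ?_
      have hK : 0 ≤ h ^ 2 / 12 * (c1 * M0) := by positivity
      set K := h ^ 2 / 12 * (c1 * M0)
      have hq : (x' - x) / x ^ 2 ≤ 1 / x - 1 / x' + (x' - x) ^ 2 := by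
        have e : (x' - x) / x ^ 2 - (1 / x - 1 / x') = (x' - x) ^ 2 * (1 / (x ^ 2 * x')) := by
          field_simp
        have hle : 1 / (x ^ 2 * x') ≤ 1 := by
          rw [div_le_one (by positivity)]
          nlinarith [mul_pos hx0 hx0']
        nlinarith [mul_le_mul_of_nonneg_left hle (sq_nonneg (x' - x))]
      have hq' := mul_le_mul_of_nonneg_left hq hK
      have e2 : (x' - x) * (h ^ 2 / 12) * (c1 * M0 / x ^ 2) = K * ((x' - x) / x ^ 2) := by
        simp only [K]; ring
      rw [e2]
      have e3 : K * (1 / x - 1 / x' + (x' - x) ^ 2) = -(K / x') - -(K / x) + K * (x' - x) ^ 2 := by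
        ring
      simp only [neg_sub_neg] at *
      nlinarith
    have h4 := abs_sub_le (mixed (d 0) h t y t) (mixed (d 0) h t y 1) (mixed (d 0) h t y 0)
    refine h4.trans ((add_le_add late hE).trans (le_of_eq ?_))
    ring

/-! ### From one dimension to `N` dimensions -/

lemma integral_pi_succ {N : ℕ} (μ : Measure ℝ) [IsProbabilityMeasure μ]
    {φ : (Fin (N + 1) → ℝ) → ℝ} (hφ : Measurable φ) {C : ℝ} (hC : ∀ x, |φ x| ≤ C) :
    ∫ x, φ x ∂(Measure.pi fun _ => μ) =
      ∫ r, ∫ x, φ (Fin.cons r x) ∂(Measure.pi fun _ : Fin N => μ) ∂μ := by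
  have hmp := (measurePreserving_piFinSuccAbove (fun _ : Fin (N + 1) => μ) 0).symm
  rw [← hmp.integral_comp', integral_prod]
  · simp
    rfl
  · exact integrable_of_bdd (hφ.comp (MeasurableEquiv.measurable _)).aestronglyMeasurable
      fun _ => hC _

/-- Two product measures are compared by exchanging the factors one at a time. -/
lemma pi_compare (μ ν : Measure ℝ) [IsProbabilityMeasure μ] [IsProbabilityMeasure ν] {B C : ℝ} :
    ∀ (N : ℕ) (φ : (Fin N → ℝ) → ℝ), Measurable φ → (∀ x, |φ x| ≤ C) →
    (∀ i x, |∫ r, φ (Function.update x i r) ∂μ - ∫ r, φ (Function.update x i r) ∂ν| ≤ B) →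
    |∫ x, φ x ∂(Measure.pi fun _ => μ) - ∫ x, φ x ∂(Measure.pi fun _ => ν)| ≤ N * B := by
  intro N
  induction N with
  | zero =>
    intro φ hφ hC H
    rw [Measure.pi_of_empty (fun _ => μ) (fun i => i.elim0),
      Measure.pi_of_empty (fun _ => ν) (fun i => i.elim0)]
    simp
  | succ N ih =>
    intro φ hφ hC H
    have hcons : Measurable fun p : ℝ × (Fin N → ℝ) =>
        φ (Fin.cons (α := fun _ => ℝ) p.1 p.2) := by
      refine hφ.comp (measurable_pi_iff.2 fun i => ?_)
      refine Fin.cases ?_ (fun j => ?_) i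
      · simpa using measurable_fst
      · simp only [Fin.cons_succ]; fun_prop
    have hm1 : ∀ r, Measurable fun x : Fin N → ℝ => φ (Fin.cons (α := fun _ => ℝ) r x) :=
      fun r => hcons.comp (measurable_const.prodMk measurable_id)
    rw [integral_pi_succ μ hφ hC, integral_pi_succ ν hφ hC]
    set Pμ := Measure.pi fun _ : Fin N => μ
    set Pν := Measure.pi fun _ : Fin N => ν
    have hA : ∀ (m : Measure ℝ) [IsProbabilityMeasure m] (P : Measure (Fin N → ℝ))
        [IsProbabilityMeasure P],
        Integrable (fun r => ∫ x, φ (Fin.cons (α := fun _ => ℝ) r x) ∂P) m := by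
      intro m _ P _
      exact integrable_of_bdd
        (hcons.stronglyMeasurable.integral_prod_right (ν := P)).aestronglyMeasurable
        fun r => abs_integral_le_of_bdd fun _ => hC _
    have hB : ∀ (m : Measure ℝ) [IsProbabilityMeasure m],
        Integrable (fun x => ∫ r, φ (Fin.cons (α := fun _ => ℝ) r x) ∂m) Pν := by
      intro m _
      exact integrable_of_bdd
        (hcons.stronglyMeasurable.integral_prod_left (μ := m)).aestronglyMeasurable
        fun r => abs_integral_le_of_bdd fun _ => hC _
    have hswap : ∀ (m : Measure ℝ) [IsProbabilityMeasure m],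
        ∫ r, ∫ x, φ (Fin.cons (α := fun _ => ℝ) r x) ∂Pν ∂m =
          ∫ x, ∫ r, φ (Fin.cons (α := fun _ => ℝ) r x) ∂m ∂Pν := by
      intro m _
      exact integral_integral_swap (integrable_of_bdd hcons.aestronglyMeasurable fun _ => hC _)
    have t1 : |∫ r, ∫ x, φ (Fin.cons (α := fun _ => ℝ) r x) ∂Pμ ∂μ -
        ∫ r, ∫ x, φ (Fin.cons (α := fun _ => ℝ) r x) ∂Pν ∂μ| ≤ N * B := by
      rw [← integral_sub (hA μ Pμ) (hA μ Pν)]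
      refine abs_integral_le_of_bdd fun r => ih _ (hm1 r) (fun _ => hC _) fun i x => ?_
      have := H i.succ (Fin.cons r x)
      simpa only [← Fin.cons_update] using this
    have t2 : |∫ r, ∫ x, φ (Fin.cons (α := fun _ => ℝ) r x) ∂Pν ∂μ -
        ∫ r, ∫ x, φ (Fin.cons (α := fun _ => ℝ) r x) ∂Pν ∂ν| ≤ B := by
      rw [hswap μ, hswap ν, ← integral_sub (hB μ) (hB ν)]
      refine abs_integral_le_of_bdd fun x => ?_
      have := H 0 (Fin.cons 0 x)
      simpa only [Fin.update_cons_zero] using this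
    refine (abs_sub_le _ (∫ r, ∫ x, φ (Fin.cons (α := fun _ => ℝ) r x) ∂Pν ∂μ) _).trans ?_
    push_cast
    linarith

lemma hasDerivAt_line {N : ℕ} {φ : (Fin N → ℝ) → ℝ} {n k : ℕ} (hφ : ContDiff ℝ n φ) (hk : k < n)
    (x : Fin N → ℝ) (i : Fin N) (r : ℝ) :
    HasDerivAt
      (fun r => iteratedFDeriv ℝ k φ (Function.update x i r) (fun _ => Pi.single i (1 : ℝ)))
      (iteratedFDeriv ℝ (k + 1) φ (Function.update x i r) (fun _ => Pi.single i (1 : ℝ))) r := by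
  have h1 : DifferentiableAt ℝ (iteratedFDeriv ℝ k φ) (Function.update x i r) :=
    (hφ.differentiable_iteratedFDeriv (by exact_mod_cast hk)) _
  have h2 := h1.hasFDerivAt.comp_hasDerivAt r (hasDerivAt_update x i r)
  have h3 := (ContinuousMultilinearMap.apply ℝ (fun _ : Fin k => Fin N → ℝ) ℝ
    (fun _ => Pi.single i (1 : ℝ))).hasFDerivAt.comp_hasDerivAt r h2
  rw [iteratedFDeriv_succ_apply_left]
  exact h3

/-- The restriction of a `C⁴` function to a line parallel to a coordinate axis, with its
derivatives. -/
lemma chain_line {N : ℕ} {φ : (Fin N → ℝ) → ℝ} (hφ : ContDiff ℝ 4 φ) {C M0 M : ℝ}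
    (hC : ∀ k ≤ 4, ∀ x, ‖iteratedFDeriv ℝ k φ x‖ ≤ C) (h0 : ∀ x, |φ x| ≤ M0) (i : Fin N)
    (h4 : ∀ x, |iteratedFDeriv ℝ 4 φ x (fun _ => Pi.single i 1)| ≤ M) (x : Fin N → ℝ) :
    Chain (fun k r => iteratedFDeriv ℝ k φ (Function.update x i r)
      (fun _ => Pi.single i (1 : ℝ))) C M0 M where
  deriv k hk r := hasDerivAt_line (n := 4) hφ hk x i r
  cont := by
    have h1 : Continuous (iteratedFDeriv ℝ 4 φ) := hφ.continuous_iteratedFDeriv le_rfl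
    have h2 : Continuous fun r : ℝ => Function.update x i r := by fun_prop
    exact (ContinuousMultilinearMap.apply ℝ (fun _ : Fin 4 => Fin N → ℝ) ℝ
      (fun _ => Pi.single i (1 : ℝ))).continuous.comp (h1.comp h2)
  bound k hk r := by
    have := (iteratedFDeriv ℝ k φ (Function.update x i r)).le_opNorm
      (fun _ => Pi.single i (1 : ℝ))
    simp only [Real.norm_eq_abs, Pi.norm_single, norm_one, Finset.prod_const_one, mul_one] at this
    exact this.trans (hC k hk _)
  zero r := by simpa using h0 _
  four r := h4 _

/-- The heat semigroup written as a Gaussian average. -/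
noncomputable def heatAv (N : ℕ) (φ : (Fin N → ℝ) → ℝ) (x : Fin N → ℝ) (t : ℝ) : ℝ :=
  ∫ y, φ (x + y) ∂(Measure.pi fun _ : Fin N => gaussM t)

/-- The random walk semigroup on `h ℤ^N`, speeded up by the factor `h⁻²`. -/
noncomputable def walkAv (N : ℕ) (h : ℝ) (φ : (Fin N → ℝ) → ℝ) (x : Fin N → ℝ) (t : ℝ) : ℝ :=
  ∫ k, φ (x + gridPt N h k) ∂(Measure.pi fun _ : Fin N => skellam (t / h ^ 2))

/-- The heat flow and the random walk differ by at most `N` times the one-dimensional error. -/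
lemma heatAv_sub_walkAv {N : ℕ} {φ : (Fin N → ℝ) → ℝ} (hφ : ContDiff ℝ 4 φ) {C M0 M : ℝ}
    (hC : ∀ k ≤ 4, ∀ x, ‖iteratedFDeriv ℝ k φ x‖ ≤ C) (h0 : ∀ x, |φ x| ≤ M0)
    (h4 : ∀ i x, |iteratedFDeriv ℝ 4 φ x (fun _ => Pi.single i 1)| ≤ M) {h t : ℝ} (hh : 0 < h)
    (ht : 0 ≤ t) (x : Fin N → ℝ) :
    |heatAv N φ x t - walkAv N h φ x t| ≤ N * (h ^ 2 / 12 * profile M0 M t) := by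
  have hφc : Continuous φ := hφ.continuous
  set ν : Measure ℝ := (skellam (t / h ^ 2)).map (fun k : ℤ => h * k) with hν
  have : IsProbabilityMeasure ν := Measure.isProbabilityMeasure_map .of_discrete
  have e : walkAv N h φ x t = ∫ y, φ (x + y) ∂(Measure.pi fun _ : Fin N => ν) := by
    have hmp : MeasurePreserving (fun (k : Fin N → ℤ) i => h * (k i : ℝ))
        (Measure.pi fun _ : Fin N => skellam (t / h ^ 2)) (Measure.pi fun _ : Fin N => ν) :=
      measurePreserving_pi (fun _ : Fin N => skellam (t / h ^ 2)) (fun _ => ν)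
        (f := fun _ (k : ℤ) => h * (k : ℝ)) fun i => ⟨.of_discrete, rfl⟩
    rw [← hmp.map_eq, integral_map hmp.measurable.aemeasurable
      (by fun_prop : Continuous fun y => φ (x + y)).aestronglyMeasurable]
    rfl
  rw [e, heatAv]
  refine pi_compare (gaussM t) ν (C := M0) N (fun y => φ (x + y)) (by fun_prop) (fun _ => h0 _)
    fun i y => ?_
  have hch := (chain_line hφ hC h0 i (h4 i) (x + y)).compare hh ht (x i)
  have hup : ∀ r : ℝ, x + Function.update y i r = Function.update (x + y) i (x i + r) := by
    intro r; ext j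
    by_cases hj : j = i
    · subst hj; simp
    · simp [hj]
  rw [hν, integral_map .of_discrete (Continuous.aestronglyMeasurable (by fun_prop))]
  simpa [hup] using hch

/-! ### The heat kernel as a product -/

lemma heatKernel_eq_prod {N : ℕ} {t : ℝ} (ht : 0 < t) (y : Fin N → ℝ) :
    heatKernel N y t = ∏ i, gaussianPDFReal 0 (2 * t).toNNReal (y i) := by
  have h2 : ((2 * t).toNNReal : ℝ) = 2 * t := Real.coe_toNNReal _ (by positivity)
  simp only [gaussianPDFReal, h2, heatKernel, Finset.prod_mul_distrib, Finset.prod_const,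
    Finset.card_univ, Fintype.card_fin, ← Real.exp_sum, sub_zero]
  congr 1
  · rw [show 2 * π * (2 * t) = 4 * π * t by ring, Real.sqrt_eq_rpow, ← Real.rpow_neg (by positivity),
      ← Real.rpow_natCast, ← Real.rpow_mul (by positivity)]
    congr 1; ring
  · congr 1
    rw [← Finset.sum_div, Finset.sum_neg_distrib]
    congr 1; ring

/-- The heat kernel is the density of the `N`-fold product of Gaussian laws. -/
lemma pi_gaussM_eq {N : ℕ} {t : ℝ} (ht : 0 < t) : (Measure.pi fun _ : Fin N => gaussM t) =
    (volume : Measure (Fin N → ℝ)).withDensity fun y => ENNReal.ofReal (heatKernel N y t) := by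
  have hv : (2 * t).toNNReal ≠ 0 := by simpa using ht
  have hInt : Integrable fun y : Fin N → ℝ => ∏ i, gaussianPDFReal 0 (2 * t).toNNReal (y i) :=
    Integrable.fintype_prod (f := fun _ : Fin N => gaussianPDFReal 0 (2 * t).toNNReal)
      fun _ => integrable_gaussianPDFReal _ _
  refine Measure.pi_eq fun s hs => ?_
  simp only [heatKernel_eq_prod ht]
  rw [withDensity_apply _ (MeasurableSet.univ_pi hs), ← ofReal_integral_eq_lintegral_ofReal
    hInt.integrableOn (Filter.Eventually.of_forall fun y => Finset.prod_nonneg fun i _ =>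
      gaussianPDFReal_nonneg _ _ _), ← integral_indicator (MeasurableSet.univ_pi hs)]
  have e : ((univ.pi s).indicator fun y : Fin N → ℝ =>
      ∏ i, gaussianPDFReal 0 (2 * t).toNNReal (y i)) =
      fun y => ∏ i, (s i).indicator (gaussianPDFReal 0 (2 * t).toNNReal) (y i) := by
    ext y
    by_cases hy : ∀ i, y i ∈ s i
    · rw [indicator_of_mem (by simpa using hy)]
      exact Finset.prod_congr rfl fun i _ => (indicator_of_mem (hy i) _).symm
    · rw [indicator_of_notMem (by simpa using hy)]
      push Not at hy
      obtain ⟨i, hi⟩ := hy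
      exact (Finset.prod_eq_zero (Finset.mem_univ i) (indicator_of_notMem hi _)).symm
  rw [e, integral_fintype_prod_volume_eq_prod
    (f := fun i => (s i).indicator (gaussianPDFReal 0 (2 * t).toNNReal)),
    ENNReal.ofReal_prod_of_nonneg fun i _ => integral_nonneg
      (indicator_nonneg fun _ _ => gaussianPDFReal_nonneg _ _ _)]
  refine Finset.prod_congr rfl fun i _ => ?_
  rw [integral_indicator (hs i), gaussM, gaussianReal_apply_eq_integral _ hv]

lemma heatSG_eq {N : ℕ} {φ : (Fin N → ℝ) → ℝ} (hφ : Continuous φ) {t : ℝ} (ht : 0 < t)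
    (x : Fin N → ℝ) : heatSG N φ t x = heatAv N φ x t := by
  have hneg : MeasurePreserving (fun (y : Fin N → ℝ) i => -y i)
      (Measure.pi fun _ : Fin N => gaussM t) (Measure.pi fun _ : Fin N => gaussM t) :=
    measurePreserving_pi (fun _ : Fin N => gaussM t) (fun _ => gaussM t)
      (f := fun _ r => -r) fun i => ⟨by fun_prop, gaussM_neg t⟩
  have h1 : heatAv N φ x t = ∫ y, φ (x - y) ∂(Measure.pi fun _ : Fin N => gaussM t) := by
    unfold heatAv
    conv_lhs => rw [← hneg.map_eq]
    rw [integral_map hneg.measurable.aemeasurable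
      (Continuous.aestronglyMeasurable (by fun_prop))]
    rfl
  have hK : Measurable fun y : Fin N → ℝ => heatKernel N y t := by
    unfold heatKernel; fun_prop
  rw [h1, pi_gaussM_eq ht, integral_withDensity_eq_integral_toReal_smul
    hK.ennreal_ofReal (Filter.Eventually.of_forall fun _ => ENNReal.ofReal_lt_top)]
  unfold heatSG
  refine integral_congr_ae (Filter.Eventually.of_forall fun y => ?_)
  have : 0 ≤ heatKernel N y t := by unfold heatKernel; positivity
  simp only [ENNReal.toReal_ofReal this, smul_eq_mul]
  ring

/-- The pure fourth derivative of the product kernel factorises. -/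
lemma iteratedFDeriv_heatKernel {N : ℕ} (i : Fin N) {k : ℕ} (hk : k ≤ 4) :
    ∀ z, iteratedFDeriv ℝ k (fun y => heatKernel N y 1) z (fun _ => Pi.single i 1) =
      kerD k (z i) * ∏ j ∈ Finset.univ.erase i, kerD 0 (z j) := by
  have hsm : ContDiff ℝ 4 fun y : Fin N → ℝ => heatKernel N y 1 := by
    unfold heatKernel; fun_prop
  have h2 : (2 * (1 : ℝ)).toNNReal = 2 := by ext; simp
  induction k with
  | zero =>
    intro z
    rw [iteratedFDeriv_zero_apply, heatKernel_eq_prod one_pos, h2,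
      ← Finset.mul_prod_erase _ _ (Finset.mem_univ i)]
    rfl
  | succ k ih =>
    intro z
    have hd := hasDerivAt_line (n := 4) hsm (by omega : k < 4) z i (z i)
    rw [Function.update_eq_self] at hd
    refine hd.unique ?_
    have hd2 := (hasDerivAt_kerD (by omega : k < 4) (z i)).mul_const
      (∏ j ∈ Finset.univ.erase i, kerD 0 (z j))
    refine hd2.congr_of_eventuallyEq (Filter.Eventually.of_forall fun r => ?_)
    simp only [ih (by omega)]
    rw [Function.update_self]
    congr 1
    refine Finset.prod_congr rfl fun j hj => ?_
    rw [Function.update_of_ne (Finset.ne_of_mem_erase hj)]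

/-- By factorisation every summand of `c_N` equals `c1`, so `c_N = N c1`. -/
lemma c1_le_cN {N : ℕ} (hN : 1 ≤ N) : c1 ≤ cN N := by
  have h : ∀ i : Fin N, ∫ z : Fin N → ℝ,
      |iteratedFDeriv ℝ 4 (fun y => heatKernel N y 1) z (fun _ => Pi.single i 1)| = c1 := by
    intro i
    have e : ∀ z : Fin N → ℝ,
        |iteratedFDeriv ℝ 4 (fun y => heatKernel N y 1) z (fun _ => Pi.single i 1)| =
        ∏ j, (if j = i then fun r => |kerD 4 r| else kerD 0) (z j) := by
      intro z
      rw [iteratedFDeriv_heatKernel i le_rfl, ← Finset.mul_prod_erase _ _ (Finset.mem_univ i),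
        abs_mul, abs_of_nonneg (a := ∏ j ∈ Finset.univ.erase i, kerD 0 (z j))
          (Finset.prod_nonneg fun j _ => gaussianPDFReal_nonneg 0 2 (z j)),
        if_pos rfl]
      congr 1
      refine Finset.prod_congr rfl fun j hj => ?_
      rw [if_neg (Finset.ne_of_mem_erase hj)]
    simp only [e]
    rw [integral_fintype_prod_volume_eq_prod
      (f := fun j => if j = i then fun r => |kerD 4 r| else kerD 0),
      ← Finset.mul_prod_erase _ _ (Finset.mem_univ i), if_pos rfl, Finset.prod_eq_one, mul_one, c1]
    intro j hj
    rw [if_neg (Finset.ne_of_mem_erase hj)]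
    exact integral_gaussianPDFReal_eq_one 0 (by norm_num)
  unfold cN
  simp only [h, Finset.sum_const, Finset.card_univ, Fintype.card_fin, nsmul_eq_mul]
  have : (1 : ℝ) ≤ N := by exact_mod_cast hN
  nlinarith [c1_nonneg]

/-! ### The weights as an integral of transition probabilities -/

/-- `G` is the transition probability of the continuous-time random walk on `ℤ^N`. -/
lemma walk_real {N : ℕ} {q : ℝ} (hq : 0 ≤ q) (j : Fin N → ℤ) :
    (Measure.pi fun _ : Fin N => skellam q).real {j} = G N j q := by
  rw [measureReal_def, Measure.pi_singleton, ENNReal.toReal_prod]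
  simp only [← measureReal_def, skellam_singleton hq, G, Finset.prod_mul_distrib,
    Finset.prod_const, Finset.card_univ, Fintype.card_fin, ← Real.exp_nat_mul]
  congr 2
  ring

lemma G_nonneg {N : ℕ} {q : ℝ} (hq : 0 ≤ q) (j : Fin N → ℤ) : 0 ≤ G N j q := by
  rw [← walk_real hq]; exact measureReal_nonneg

/-- The walk has left the origin by time `t / h²` with probability `O(min(t, 1))`. -/
lemma one_sub_G_le {N : ℕ} {h t : ℝ} (ht : 0 ≤ t) :
    1 - G N 0 (t / h ^ 2) ≤ (1 + 2 * N / h ^ 2) * profile 0 1 t := by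
  have hq : 0 ≤ t / h ^ 2 := by positivity
  have ha : 0 ≤ 2 * N / h ^ 2 := by positivity
  unfold profile
  split_ifs with h1
  · have hI : 1 ≤ ∏ i : Fin N, besselI ((0 : Fin N → ℤ) i).natAbs (2 * (t / h ^ 2)) := by
      have := le_besselI 0 hq
      simp at this ⊢
      exact one_le_pow₀ this
    have hE := Real.add_one_le_exp (-(2 * (N : ℝ)) * (t / h ^ 2))
    have hG : Real.exp (-(2 * (N : ℝ)) * (t / h ^ 2)) ≤ G N 0 (t / h ^ 2) := by
      unfold G
      nlinarith [Real.exp_pos (-(2 * (N : ℝ)) * (t / h ^ 2))]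
    have e : -(2 * (N : ℝ)) * (t / h ^ 2) = -(2 * N / h ^ 2 * t) := by ring
    rw [e] at hE hG
    linarith
  · have := G_nonneg (N := N) hq 0
    simp only [mul_zero, zero_mul, add_zero, mul_one]
    linarith

lemma sum_G_le {N : ℕ} {q : ℝ} (hq : 0 ≤ q) (s : Finset {j : Fin N → ℤ // j ≠ 0}) :
    ∑ j ∈ s, G N j.1 q ≤ 1 - G N 0 q := by
  set W := Measure.pi fun _ : Fin N => skellam q
  have h1 : ∑ j ∈ s, G N j.1 q = W.real (s.map (Function.Embedding.subtype _) : Set (Fin N → ℤ)) := by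
    rw [← sum_measureReal_singleton, Finset.sum_map]
    exact Finset.sum_congr rfl fun j _ => (walk_real hq _).symm
  rw [h1, ← walk_real hq, ← probReal_compl_eq_one_sub .of_discrete]
  refine measureReal_mono fun x hx => ?_
  simp only [Finset.coe_map, Function.Embedding.subtype_apply, mem_image] at hx
  obtain ⟨y, -, rfl⟩ := hx
  exact y.2

lemma G_le {N : ℕ} {q : ℝ} (hq : 0 ≤ q) (j : {j : Fin N → ℤ // j ≠ 0}) :
    G N j.1 q ≤ 1 - G N 0 q := by
  simpa using sum_G_le hq {j}

lemma summable_G {N : ℕ} {q : ℝ} (hq : 0 ≤ q) :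
    Summable fun j : {j : Fin N → ℤ // j ≠ 0} => G N j.1 q :=
  summable_of_sum_le (fun _ => G_nonneg hq _) (sum_G_le hq)

lemma summable_mul_bdd {ι : Type*} {k v : ι → ℝ} (hk : Summable k) (hk0 : ∀ j, 0 ≤ k j) {C : ℝ}
    (hv : ∀ j, |v j| ≤ C) : Summable fun j => v j * k j := by
  refine Summable.of_norm_bounded (hk.mul_left C) fun j => ?_
  rw [norm_mul, Real.norm_eq_abs, Real.norm_of_nonneg (hk0 j)]
  exact mul_le_mul_of_nonneg_right (hv j) (hk0 j)

lemma gridPt_zero (N : ℕ) (h : ℝ) : gridPt N h 0 = 0 := by ext; simp [gridPt]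

lemma walkAv_sub {N : ℕ} {φ : (Fin N → ℝ) → ℝ} {M0 : ℝ} (h0 : ∀ x, |φ x| ≤ M0) {h t : ℝ}
    (ht : 0 ≤ t) (x : Fin N → ℝ) :
    walkAv N h φ x t - φ x =
      ∑' j : {j : Fin N → ℤ // j ≠ 0}, (φ (x + gridPt N h j.1) - φ x) * G N j.1 (t / h ^ 2) := by
  have hq : 0 ≤ t / h ^ 2 := by positivity
  have hi : Integrable (fun k => φ (x + gridPt N h k))
      (Measure.pi fun _ : Fin N => skellam (t / h ^ 2)) :=
    integrable_of_bdd .of_discrete fun k => h0 _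
  have h1 : walkAv N h φ x t - φ x = ∫ k, (φ (x + gridPt N h k) - φ x)
      ∂(Measure.pi fun _ : Fin N => skellam (t / h ^ 2)) := by
    rw [integral_sub hi (integrable_const _)]
    simp [walkAv]
  have hi2 : Integrable (fun k => φ (x + gridPt N h k) - φ x)
      (Measure.pi fun _ : Fin N => skellam (t / h ^ 2)) := hi.sub (integrable_const _)
  rw [h1, integral_countable hi2]
  simp only [walk_real hq, smul_eq_mul]
  rw [← tsum_subtype_eq_of_support_subset (s := {j | j ≠ 0})]
  · exact tsum_congr fun j => mul_comm _ _
  · intro j hj hj0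
    apply hj
    simp [show j = 0 from hj0, gridPt_zero]

lemma walkAv_sub_le {N : ℕ} {φ : (Fin N → ℝ) → ℝ} {M0 : ℝ} (h0 : ∀ x, |φ x| ≤ M0) {h t : ℝ}
    (ht : 0 ≤ t) (x : Fin N → ℝ) :
    |walkAv N h φ x t - φ x| ≤ 2 * M0 * ((1 + 2 * N / h ^ 2) * profile 0 1 t) := by
  have hq : 0 ≤ t / h ^ 2 := by positivity
  have hM0 : 0 ≤ M0 := (abs_nonneg _).trans (h0 0)
  have hv : ∀ j : {j : Fin N → ℤ // j ≠ 0}, |φ (x + gridPt N h j.1) - φ x| ≤ 2 * M0 := fun j =>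
    (abs_sub _ _).trans (by linarith [h0 (x + gridPt N h j.1), h0 x])
  have hs := summable_G (N := N) hq
  rw [walkAv_sub h0 ht]
  have h1 := tsum_of_norm_bounded (hs.hasSum.mul_left (2 * M0))
    (f := fun j : {j : Fin N → ℤ // j ≠ 0} =>
      (φ (x + gridPt N h j.1) - φ x) * G N j.1 (t / h ^ 2)) fun j => by
      rw [norm_mul, Real.norm_eq_abs, Real.norm_of_nonneg (G_nonneg hq _)]
      exact mul_le_mul_of_nonneg_right (hv j) (G_nonneg hq _)
  refine h1.trans (mul_le_mul_of_nonneg_left ?_ (by positivity))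
  exact (Real.tsum_le_of_sum_le (fun _ => G_nonneg hq _) (sum_G_le hq)).trans (one_sub_G_le ht)

lemma measurable_G {N : ℕ} (j : Fin N → ℤ) : Measurable (G N j) := by
  have hb : ∀ m : ℕ, Measurable fun q : ℝ => besselI m (2 * q) := by
    intro m
    refine measurable_of_tendsto_metrizable (f := fun n q => ∑ k ∈ Finset.range n,
      q ^ (2 * k + m) / ((k.factorial : ℝ) * (k + m).factorial)) (fun n => by fun_prop) ?_
    rw [tendsto_pi_nhds]
    intro q
    rw [besselI_two_mul]
    exact (summable_besselI m q).hasSum.tendsto_sum_nat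
  unfold G
  exact (by fun_prop : Measurable fun t : ℝ => Real.exp (-(2 * (N : ℝ)) * t)).mul
    (Finset.measurable_prod _ fun i _ => hb _)

/-- The time integral of the error profile. -/
lemma integral_profile (M0 M : ℝ) {σ : ℝ} (hσ : σ ∈ Ioo (0 : ℝ) 2) :
    IntegrableOn (fun t => profile M0 M t * t ^ (-1 - σ / 2)) (Ioi 0) ∧
    ∫ t in Ioi (0 : ℝ), profile M0 M t * t ^ (-1 - σ / 2) =
      M * (4 / (σ * (2 - σ))) + c1 * M0 * (4 / (σ * (2 + σ))) := by
  obtain ⟨h1, h2⟩ := hσ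
  have eI : ∀ t ∈ Ioc (0 : ℝ) 1, M * t ^ (-(σ / 2)) = profile M0 M t * t ^ (-1 - σ / 2) := by
    intro t ht
    rw [profile, if_pos ht.2, show -(σ / 2) = 1 + (-1 - σ / 2) by ring, Real.rpow_add ht.1,
      Real.rpow_one]
    ring
  have eJ : ∀ t ∈ Ioi (1 : ℝ), (M + c1 * M0) * t ^ (-1 - σ / 2) - c1 * M0 * t ^ (-2 - σ / 2) =
      profile M0 M t * t ^ (-1 - σ / 2) := by
    intro t ht
    have ht0 : (0 : ℝ) < t := lt_trans one_pos ht
    rw [profile, if_neg (not_le.2 ht), show -2 - σ / 2 = -1 + (-1 - σ / 2) by ring,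
      Real.rpow_add ht0, Real.rpow_neg_one]
    ring
  have i1 : IntegrableOn (fun t : ℝ => t ^ (-(σ / 2))) (Ioc 0 1) :=
    (intervalIntegrable_iff_integrableOn_Ioc_of_le zero_le_one).1
      (intervalIntegral.intervalIntegrable_rpow' (by linarith))
  have j1 : IntegrableOn (fun t : ℝ => t ^ (-1 - σ / 2)) (Ioi 1) :=
    integrableOn_Ioi_rpow_of_lt (by linarith) one_pos
  have j2 : IntegrableOn (fun t : ℝ => t ^ (-2 - σ / 2)) (Ioi 1) :=
    integrableOn_Ioi_rpow_of_lt (by linarith) one_pos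
  have iI : IntegrableOn (fun t => profile M0 M t * t ^ (-1 - σ / 2)) (Ioc 0 1) :=
    IntegrableOn.congr_fun (f := fun t => M * t ^ (-(σ / 2))) (i1.const_mul M) eI
      measurableSet_Ioc
  have iJ : IntegrableOn (fun t => profile M0 M t * t ^ (-1 - σ / 2)) (Ioi 1) :=
    IntegrableOn.congr_fun
      (f := fun t => (M + c1 * M0) * t ^ (-1 - σ / 2) - c1 * M0 * t ^ (-2 - σ / 2))
      ((j1.const_mul _).sub (j2.const_mul _)) eJ measurableSet_Ioi
  rw [← Ioc_union_Ioi_eq_Ioi (zero_le_one : (0 : ℝ) ≤ 1)]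
  refine ⟨iI.union iJ, ?_⟩
  rw [setIntegral_union (Ioc_disjoint_Ioi le_rfl) measurableSet_Ioi iI iJ,
    ← setIntegral_congr_fun measurableSet_Ioc eI, ← setIntegral_congr_fun measurableSet_Ioi eJ,
    integral_sub (j1.const_mul _) (j2.const_mul _), integral_const_mul, integral_const_mul,
    integral_const_mul, ← intervalIntegral.integral_of_le zero_le_one,
    integral_rpow (Or.inl (by linarith)), integral_Ioi_rpow_of_lt (by linarith) one_pos,
    integral_Ioi_rpow_of_lt (by linarith) one_pos, Real.one_rpow, Real.one_rpow, Real.one_rpow,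
    Real.zero_rpow (by linarith)]
  have a1 : -(σ / 2) + 1 ≠ 0 := by linarith
  have a2 : -1 - σ / 2 + 1 ≠ 0 := by linarith
  have a3 : -2 - σ / 2 + 1 ≠ 0 := by linarith
  have a4 : 2 - σ ≠ 0 := by linarith
  have a5 : 2 + σ ≠ 0 := by linarith
  have e1 : (1 - 0) / (-(σ / 2) + 1) = 2 / (2 - σ) := by
    rw [div_eq_div_iff a1 a4]; ring
  have e2 : -1 / (-1 - σ / 2 + 1) = 2 / σ := by
    rw [div_eq_div_iff a2 h1.ne']; ring
  have e3 : -1 / (-2 - σ / 2 + 1) = 2 / (2 + σ) := by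
    rw [div_eq_div_iff a3 a5]; ring
  rw [e1, e2, e3]
  field_simp
  ring

lemma integrableOn_G {N : ℕ} {σ h : ℝ} (hσ : σ ∈ Ioo (0 : ℝ) 2)
    (j : {j : Fin N → ℤ // j ≠ 0}) :
    IntegrableOn (fun t => G N j.1 (t / h ^ 2) * t ^ (-1 - σ / 2)) (Ioi 0) := by
  have hB := (integral_profile 0 1 hσ).1.const_mul (1 + 2 * N / h ^ 2)
  refine Integrable.mono' hB ?_ ?_
  · have := (measurable_G j.1).comp (measurable_id.div_const (h ^ 2))
    exact (this.mul (by fun_prop)).aestronglyMeasurable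
  · refine (ae_restrict_iff' measurableSet_Ioi).2 (Filter.Eventually.of_forall fun t ht => ?_)
    have ht0 : (0 : ℝ) < t := ht
    have hq : 0 ≤ t / h ^ 2 := by positivity
    have hp : 0 ≤ t ^ (-1 - σ / 2) := by positivity
    rw [norm_mul, Real.norm_of_nonneg (G_nonneg hq _), Real.norm_of_nonneg hp, ← mul_assoc]
    exact mul_le_mul_of_nonneg_right ((G_le hq j).trans (one_sub_G_le ht0.le)) hp

/-- The weight after the substitution `t ↦ t / h²`. -/
lemma kappa_eq {N : ℕ} {σ h : ℝ} (hh : 0 < h) (j : Fin N → ℤ) :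
    kappa N σ h j = |Real.Gamma (-σ / 2)|⁻¹ *
      ∫ t in Ioi (0 : ℝ), G N j (t / h ^ 2) * t ^ (-1 - σ / 2) := by
  have hb : 0 < (h ^ 2)⁻¹ := by positivity
  have h1 := integral_comp_mul_left_Ioi (fun t => G N j t * t ^ (-1 - σ / 2)) 0 hb
  rw [mul_zero, inv_inv, smul_eq_mul] at h1
  have h2 : ∫ t in Ioi (0 : ℝ), G N j ((h ^ 2)⁻¹ * t) * ((h ^ 2)⁻¹ * t) ^ (-1 - σ / 2) =
      h ^ (2 + σ) * ∫ t in Ioi (0 : ℝ), G N j (t / h ^ 2) * t ^ (-1 - σ / 2) := by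
    rw [← integral_const_mul]
    refine setIntegral_congr_fun measurableSet_Ioi fun t ht => ?_
    have ht0 : (0 : ℝ) < t := ht
    have e : ((h ^ 2)⁻¹ : ℝ) ^ (-1 - σ / 2) = h ^ (2 + σ) := by
      rw [← Real.rpow_natCast, ← Real.rpow_neg hh.le, ← Real.rpow_mul hh.le]
      congr 1; push_cast; ring
    rw [Real.mul_rpow hb.le ht0.le, e, div_eq_inv_mul]
    ring_nf
  rw [h2] at h1
  have e2 : h ^ (2 + σ) = h ^ 2 * h ^ σ := by
    rw [Real.rpow_add hh]; norm_num
  have hs : 0 < h ^ σ := by positivity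
  have h3 : ∫ t in Ioi (0 : ℝ), G N j (t / h ^ 2) * t ^ (-1 - σ / 2) =
      h ^ (-σ) * ∫ t in Ioi (0 : ℝ), G N j t * t ^ (-1 - σ / 2) := by
    rw [Real.rpow_neg hh.le]
    rw [e2, mul_assoc] at h1
    have := mul_left_cancel₀ (by positivity : h ^ 2 ≠ 0) h1
    rw [← this]; field_simp
  rw [h3, kappa]
  ring

lemma integral_G_nonneg {N : ℕ} {σ h : ℝ} (j : Fin N → ℤ) :
    0 ≤ ∫ t in Ioi (0 : ℝ), G N j (t / h ^ 2) * t ^ (-1 - σ / 2) := by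
  refine setIntegral_nonneg measurableSet_Ioi fun t ht => ?_
  have ht0 : (0 : ℝ) < t := ht
  exact mul_nonneg (G_nonneg (by positivity) _) (by positivity)

lemma kappa_nonneg {N : ℕ} {σ h : ℝ} (hh : 0 < h) (j : Fin N → ℤ) : 0 ≤ kappa N σ h j := by
  rw [kappa_eq hh]
  exact mul_nonneg (by positivity) (integral_G_nonneg j)

lemma summable_integral_G {N : ℕ} {σ h : ℝ} (hσ : σ ∈ Ioo (0 : ℝ) 2) :
    Summable fun j : {j : Fin N → ℤ // j ≠ 0} =>
      ∫ t in Ioi (0 : ℝ), G N j.1 (t / h ^ 2) * t ^ (-1 - σ / 2) := by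
  refine summable_of_sum_le (c := ∫ t in Ioi (0 : ℝ), (1 + 2 * N / h ^ 2) *
    (profile 0 1 t * t ^ (-1 - σ / 2))) (fun j => integral_G_nonneg j.1) fun s => ?_
  rw [← integral_finsetSum _ fun j _ => integrableOn_G hσ j]
  refine setIntegral_mono_on (integrable_finsetSum _ fun j _ => integrableOn_G hσ j)
    ((integral_profile 0 1 hσ).1.const_mul _) measurableSet_Ioi fun t ht => ?_
  have ht0 : (0 : ℝ) < t := ht
  rw [← Finset.sum_mul, ← mul_assoc]
  exact mul_le_mul_of_nonneg_right ((sum_G_le (by positivity) s).trans (one_sub_G_le ht0.le))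
    (by positivity)

lemma summable_kappa {N : ℕ} {σ h : ℝ} (hσ : σ ∈ Ioo (0 : ℝ) 2) (hh : 0 < h) :
    Summable fun j : {j : Fin N → ℤ // j ≠ 0} => kappa N σ h j.1 := by
  simp only [kappa_eq hh]
  exact (summable_integral_G hσ).mul_left _

/-! ### Consistency of the discretisation -/

/-- The discrete operator is the subordination integral of the random walk semigroup. -/
lemma discrete_eq {N : ℕ} {φ : (Fin N → ℝ) → ℝ} {M0 : ℝ} (h0 : ∀ x, |φ x| ≤ M0)
    {σ h : ℝ} (hσ : σ ∈ Ioo (0 : ℝ) 2) (hh : 0 < h) (x : Fin N → ℝ) :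
    ∑' j : {j : Fin N → ℤ // j ≠ 0}, (φ (x + gridPt N h j.1) - φ x) * kappa N σ h j.1 =
      |Real.Gamma (-σ / 2)|⁻¹ *
        ∫ t in Ioi (0 : ℝ), (walkAv N h φ x t - φ x) * t ^ (-1 - σ / 2) := by
  set F : {j : Fin N → ℤ // j ≠ 0} → ℝ → ℝ := fun j t =>
    (φ (x + gridPt N h j.1) - φ x) * (G N j.1 (t / h ^ 2) * t ^ (-1 - σ / 2)) with hF
  have hv : ∀ j : {j : Fin N → ℤ // j ≠ 0}, |φ (x + gridPt N h j.1) - φ x| ≤ 2 * M0 := fun j =>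
    (abs_sub _ _).trans (by linarith [h0 (x + gridPt N h j.1), h0 x])
  have hFi : ∀ j, Integrable (F j) (volume.restrict (Ioi 0)) := fun j =>
    (integrableOn_G hσ j).const_mul _
  have hFn : ∀ j, ∫ t in Ioi (0 : ℝ), ‖F j t‖ = |φ (x + gridPt N h j.1) - φ x| *
      ∫ t in Ioi (0 : ℝ), G N j.1 (t / h ^ 2) * t ^ (-1 - σ / 2) := by
    intro j
    rw [← integral_const_mul]
    refine setIntegral_congr_fun measurableSet_Ioi fun t ht => ?_
    have ht0 : (0 : ℝ) < t := ht
    have : 0 ≤ G N j.1 (t / h ^ 2) * t ^ (-1 - σ / 2) :=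
      mul_nonneg (G_nonneg (by positivity) _) (by positivity)
    simp only [hF, norm_mul _ (G N j.1 (t / h ^ 2) * t ^ (-1 - σ / 2)), Real.norm_of_nonneg this,
      Real.norm_eq_abs]
  have hFs : Summable fun j => ∫ t in Ioi (0 : ℝ), ‖F j t‖ := by
    simp only [hFn]
    exact summable_mul_bdd (summable_integral_G hσ) (fun j => integral_G_nonneg j.1)
      (C := 2 * M0) fun j => by rw [abs_abs]; exact hv j
  have key := (hasSum_integral_of_summable_integral_norm hFi hFs).mul_left
    (|Real.Gamma (-σ / 2)|⁻¹)
  have e1 : ∀ j : {j : Fin N → ℤ // j ≠ 0}, (φ (x + gridPt N h j.1) - φ x) * kappa N σ h j.1 =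
      |Real.Gamma (-σ / 2)|⁻¹ * ∫ t in Ioi (0 : ℝ), F j t := by
    intro j
    rw [hF, integral_const_mul, kappa_eq hh]; ring
  rw [tsum_congr e1, key.tsum_eq]
  congr 1
  refine setIntegral_congr_fun measurableSet_Ioi fun t ht => ?_
  have ht0 : (0 : ℝ) < t := ht
  rw [walkAv_sub h0 ht0.le, ← tsum_mul_right]
  exact tsum_congr fun j => by simp only [hF]; ring

lemma integrableOn_walk {N : ℕ} {φ : (Fin N → ℝ) → ℝ} {M0 : ℝ} (h0 : ∀ x, |φ x| ≤ M0)
    {σ h : ℝ} (hσ : σ ∈ Ioo (0 : ℝ) 2) (x : Fin N → ℝ) :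
    IntegrableOn (fun t => (walkAv N h φ x t - φ x) * t ^ (-1 - σ / 2)) (Ioi 0) := by
  refine Integrable.mono' ((integral_profile 0 1 hσ).1.const_mul
    (2 * M0 * (1 + 2 * N / h ^ 2))) ?_ ?_
  · have hm : AEMeasurable (fun t => walkAv N h φ x t - φ x) (volume.restrict (Ioi 0)) := by
      refine aemeasurable_of_tendsto_metrizable_ae Filter.atTop
        (f := fun (s : Finset {j : Fin N → ℤ // j ≠ 0}) t =>
          ∑ j ∈ s, (φ (x + gridPt N h j.1) - φ x) * G N j.1 (t / h ^ 2)) (fun s => ?_) ?_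
      · refine (Finset.measurable_sum _ fun j _ => Measurable.const_mul ?_ _).aemeasurable
        exact (measurable_G j.1).comp (measurable_id.div_const (h ^ 2))
      · refine (ae_restrict_iff' measurableSet_Ioi).2 (Filter.Eventually.of_forall fun t ht => ?_)
        have ht0 : (0 : ℝ) < t := ht
        rw [walkAv_sub h0 ht0.le]
        exact (summable_mul_bdd (summable_G (by positivity)) (fun j => G_nonneg (by positivity) _)
          (C := 2 * M0) fun j => (abs_sub _ _).trans
            (by linarith [h0 (x + gridPt N h j.1), h0 x])).hasSum
    exact (hm.mul (by fun_prop)).aestronglyMeasurable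
  · refine (ae_restrict_iff' measurableSet_Ioi).2 (Filter.Eventually.of_forall fun t ht => ?_)
    have ht0 : (0 : ℝ) < t := ht
    have hp : 0 ≤ t ^ (-1 - σ / 2) := by positivity
    rw [norm_mul, Real.norm_of_nonneg hp, Real.norm_eq_abs]
    refine (mul_le_mul_of_nonneg_right (walkAv_sub_le h0 ht0.le x) hp).trans (le_of_eq ?_)
    ring

/-- Continuity in time, by rescaling to a fixed Gaussian law. -/
lemma continuous_heatAv {N : ℕ} {φ : (Fin N → ℝ) → ℝ} (hφ : Continuous φ) {M0 : ℝ}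
    (h0 : ∀ x, |φ x| ≤ M0) (x : Fin N → ℝ) : ContinuousOn (heatAv N φ x) (Ioi 0) := by
  have hc : Continuous fun t : ℝ =>
      ∫ y, φ (x + fun i => √t * y i) ∂(Measure.pi fun _ : Fin N => gaussM 1) := by
    refine continuous_of_dominated (bound := fun _ => M0)
      (fun t => (Continuous.aestronglyMeasurable (by fun_prop)))
      (fun t => Filter.Eventually.of_forall fun y => h0 _) (integrable_const _)
      (Filter.Eventually.of_forall fun y => by fun_prop)
  refine hc.continuousOn.congr fun t ht => ?_
  have hmp : MeasurePreserving (fun (y : Fin N → ℝ) i => √t * y i)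
      (Measure.pi fun _ : Fin N => gaussM 1) (Measure.pi fun _ : Fin N => gaussM t) :=
    measurePreserving_pi (fun _ : Fin N => gaussM 1) (fun _ => gaussM t)
      (f := fun _ r => √t * r) fun i => ⟨by fun_prop, gaussM_scale (le_of_lt ht)⟩
  rw [heatAv, ← hmp.map_eq, integral_map hmp.measurable.aemeasurable
      (Continuous.aestronglyMeasurable (by fun_prop))]

/-- The functional equation, applied twice, moves the argument into `[1, 2]`. -/
lemma abs_Gamma_eq {σ : ℝ} (hσ : σ ∈ Ioo (0 : ℝ) 2) :
    |Real.Gamma (-σ / 2)| = Real.Gamma (2 - σ / 2) * (4 / (σ * (2 - σ))) := by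
  obtain ⟨h1, h2⟩ := hσ
  have e1 := Real.Gamma_add_one (s := -σ / 2) (by linarith)
  have e2 := Real.Gamma_add_one (s := -σ / 2 + 1) (by linarith)
  have hp : 0 < Real.Gamma (2 - σ / 2) := Real.Gamma_pos_of_pos (by linarith)
  rw [show -σ / 2 + 1 + 1 = 2 - σ / 2 by ring, e1] at e2
  have h3 : 0 < 2 - σ := by linarith
  have e3 : Real.Gamma (-σ / 2) = -(Real.Gamma (2 - σ / 2) * (4 / (σ * (2 - σ)))) := by
    rw [e2]; field_simp; ring
  rw [e3, abs_neg, abs_of_nonneg (by positivity)]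

/-- Second-order consistency of the discrete operator: both operators are subordination integrals
with the same weight, of the random walk and of the heat semigroup, so the error is the weighted
integral of the difference of the two semigroups. -/
lemma consistency {N : ℕ} (hN : 1 ≤ N) {φ : (Fin N → ℝ) → ℝ} (hφ : ContDiff ℝ 4 φ)
    {C M0 M : ℝ}
    (hC : ∀ k ≤ 4, ∀ x, ‖iteratedFDeriv ℝ k φ x‖ ≤ C) (h0 : ∀ x, |φ x| ≤ M0)
    (h4 : ∀ i x, |iteratedFDeriv ℝ 4 φ x (fun _ => Pi.single i 1)| ≤ M) {σ h : ℝ}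
    (hσ : σ ∈ Ioo (0 : ℝ) 2) (hh : 0 < h) (x : Fin N → ℝ) :
    |∑' j : {j : Fin N → ℤ // j ≠ 0}, (φ (x + gridPt N h j.1) - φ x) * kappa N σ h j.1 -
      fracLap N σ φ x| ≤ (N : ℝ) / 10 * (M + ((2 - σ) / (2 + σ)) * cN N * M0) * h ^ 2 := by
  have hφc := hφ.continuous
  have hM0 : 0 ≤ M0 := (abs_nonneg _).trans (h0 0)
  have hM : 0 ≤ M := (abs_nonneg _).trans (h4 ⟨0, hN⟩ 0)
  have hσ' := hσ
  obtain ⟨hs1, hs2⟩ := hσ'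
  obtain ⟨ip, ep⟩ := integral_profile M0 M hσ
  have hW := integrableOn_walk (h := h) h0 hσ x
  have hdiff : ∀ t ∈ Ioi (0 : ℝ), |(walkAv N h φ x t - φ x) * t ^ (-1 - σ / 2) -
      (heatAv N φ x t - φ x) * t ^ (-1 - σ / 2)| ≤
      N * (h ^ 2 / 12) * (profile M0 M t * t ^ (-1 - σ / 2)) := by
    intro t ht
    have ht0 : (0 : ℝ) < t := ht
    have hp : 0 ≤ t ^ (-1 - σ / 2) := by positivity
    rw [← sub_mul, abs_mul, abs_of_nonneg hp, sub_sub_sub_cancel_right, abs_sub_comm]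
    refine (mul_le_mul_of_nonneg_right (heatAv_sub_walkAv hφ hC h0 h4 hh ht0.le x) hp).trans
      (le_of_eq ?_)
    ring
  have hH : IntegrableOn (fun t => (heatAv N φ x t - φ x) * t ^ (-1 - σ / 2)) (Ioi 0) := by
    refine Integrable.mono' (hW.norm.add (ip.const_mul (N * (h ^ 2 / 12)))) ?_ ?_
    · refine ContinuousOn.aestronglyMeasurable ?_ measurableSet_Ioi
      refine ((continuous_heatAv hφc h0 x).sub continuousOn_const).mul ?_
      exact continuousOn_id.rpow_const fun t ht => Or.inl (ne_of_gt ht)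
    · refine (ae_restrict_iff' measurableSet_Ioi).2 (Filter.Eventually.of_forall fun t ht => ?_)
      have := hdiff t ht
      simp only [Pi.add_apply, Real.norm_eq_abs]
      rw [abs_sub_comm] at this
      linarith [abs_sub_abs_le_abs_sub ((heatAv N φ x t - φ x) * t ^ (-1 - σ / 2))
        ((walkAv N h φ x t - φ x) * t ^ (-1 - σ / 2))]
  have eL : fracLap N σ φ x = |Real.Gamma (-σ / 2)|⁻¹ *
      ∫ t in Ioi (0 : ℝ), (heatAv N φ x t - φ x) * t ^ (-1 - σ / 2) := by
    unfold fracLap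
    congr 1
    refine setIntegral_congr_fun measurableSet_Ioi fun t ht => ?_
    simp only [heatSG_eq hφc ht]
  have hg : 5 / 6 ≤ Real.Gamma (2 - σ / 2) := five_sixths_le_Gamma (by linarith) (by linarith)
  have hb : |∫ t in Ioi (0 : ℝ), ((walkAv N h φ x t - φ x) * t ^ (-1 - σ / 2) -
      (heatAv N φ x t - φ x) * t ^ (-1 - σ / 2))| ≤
      N * (h ^ 2 / 12) * (M * (4 / (σ * (2 - σ))) + c1 * M0 * (4 / (σ * (2 + σ)))) := by
    rw [← ep, ← integral_const_mul]
    refine abs_integral_le_integral_abs.trans (setIntegral_mono_on (hW.sub hH).abs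
      (ip.const_mul _) measurableSet_Ioi hdiff)
  rw [discrete_eq h0 hσ hh, eL, ← mul_sub, ← integral_sub hW hH, abs_mul, abs_inv, abs_abs,
    abs_Gamma_eq hσ]
  set g := Real.Gamma (2 - σ / 2)
  have h3 : 0 < 2 - σ := by linarith
  have hg0 : 0 < g := by linarith
  have hc := c1_le_cN hN
  have hc0 := c1_nonneg
  refine (mul_le_mul_of_nonneg_left hb (by positivity)).trans ?_
  have e : (g * (4 / (σ * (2 - σ))))⁻¹ * (N * (h ^ 2 / 12) *
      (M * (4 / (σ * (2 - σ))) + c1 * M0 * (4 / (σ * (2 + σ))))) =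
      (1 / (12 * g)) * (N * (M + (2 - σ) / (2 + σ) * c1 * M0) * h ^ 2) := by
    field_simp
  rw [e]
  have hgi : 1 / (12 * g) ≤ 1 / 10 := by
    apply one_div_le_one_div_of_le <;> linarith
  have hX : N * (M + (2 - σ) / (2 + σ) * c1 * M0) * h ^ 2 ≤
      N * (M + (2 - σ) / (2 + σ) * cN N * M0) * h ^ 2 := by gcongr
  have hX0 : 0 ≤ N * (M + (2 - σ) / (2 + σ) * c1 * M0) * h ^ 2 := by positivity
  calc _ ≤ 1 / 10 * (N * (M + (2 - σ) / (2 + σ) * c1 * M0) * h ^ 2) :=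
        mul_le_mul_of_nonneg_right hgi hX0
    _ ≤ 1 / 10 * (N * (M + (2 - σ) / (2 + σ) * cN N * M0) * h ^ 2) := by linarith
    _ = _ := by ring

/-! ### Monotonicity of the scheme and accumulation of the error -/

/-- One step of the scheme contracts the error up to the local truncation error: under the CFL
condition the new error is a sub-convex combination of the old errors, which `F` can only damp
because it is nondecreasing and one-sidedly Lipschitz. Here `R` is the spatial truncation error. -/
lemma monotone_step {ι : Type*} {k : ι → ℝ} (hk : Summable k) (hk0 : ∀ j, 0 ≤ k j) {τ LF : ℝ}
    (hτ : 0 < τ) (hLF : 0 < LF) (hCFL : τ * LF * ∑' j, k j ≤ 1) {F : ℝ → ℝ}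
    (hF : ∀ l₁ l₂ : ℝ, F l₁ - F l₂ ≤ LF * max (l₁ - l₂) 0) {e E : ℝ} {v : ι → ℝ}
    (he : |e| ≤ E) (hv : ∀ j, |v j| ≤ E) {A B R K : ℝ}
    (hA : A = (∑' j, (v j - e) * k j) + R + B) (hR : |R| ≤ K) :
    |e + τ * (F A - F B)| ≤ E + τ * LF * K := by
  have hK : 0 ≤ K := (abs_nonneg _).trans hR
  obtain ⟨he1, he2⟩ := abs_le.1 he
  obtain ⟨hR1, hR2⟩ := abs_le.1 hR
  have hs : 0 ≤ ∑' j, k j := tsum_nonneg hk0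
  have hsum : Summable fun j => (v j - e) * k j :=
    summable_mul_bdd (C := E + E) hk hk0 fun j => (abs_sub _ _).trans (add_le_add (hv j) he)
  have up : ∑' j, (v j - e) * k j ≤ (E - e) * ∑' j, k j := by
    rw [← tsum_mul_left]
    exact hsum.tsum_le_tsum (fun j => mul_le_mul_of_nonneg_right
      (by linarith [(abs_le.1 (hv j)).2]) (hk0 j)) (hk.mul_left _)
  have lo : -((E + e) * ∑' j, k j) ≤ ∑' j, (v j - e) * k j := by
    rw [← neg_mul, ← tsum_mul_left]
    exact (hk.mul_left _).tsum_le_tsum (fun j => mul_le_mul_of_nonneg_right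
      (by linarith [(abs_le.1 (hv j)).1]) (hk0 j)) hsum
  have hp : 0 ≤ (E - e) * ∑' j, k j := mul_nonneg (by linarith) hs
  have hm : 0 ≤ (E + e) * ∑' j, k j := mul_nonneg (by linarith) hs
  have h1 : F A - F B ≤ LF * ((E - e) * (∑' j, k j) + K) :=
    (hF A B).trans (mul_le_mul_of_nonneg_left (max_le (by linarith) (by linarith)) hLF.le)
  have h2 : F B - F A ≤ LF * ((E + e) * (∑' j, k j) + K) :=
    (hF B A).trans (mul_le_mul_of_nonneg_left (max_le (by linarith) (by linarith)) hLF.le)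
  have h3 := mul_le_mul_of_nonneg_left h1 hτ.le
  have h4 := mul_le_mul_of_nonneg_left h2 hτ.le
  have h5 := mul_le_mul_of_nonneg_right hCFL (show 0 ≤ E - e by linarith)
  have h6 := mul_le_mul_of_nonneg_right hCFL (show 0 ≤ E + e by linarith)
  rw [abs_le]
  constructor <;> linarith

/-- First-order Taylor bound for one explicit Euler step. -/
lemma euler_step {w wt wtt : ℝ → ℝ} {T Mtt s τ : ℝ} (hs : 0 ≤ s) (hτ : 0 ≤ τ) (hsT : s + τ ≤ T)
    (h1 : ∀ t ∈ Icc (0 : ℝ) T, HasDerivWithinAt w (wt t) (Icc 0 T) t)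
    (h2 : ∀ t ∈ Icc (0 : ℝ) T, HasDerivWithinAt wt (wtt t) (Icc 0 T) t)
    (hM : ∀ t ∈ Icc (0 : ℝ) T, |wtt t| ≤ Mtt) :
    |w (s + τ) - w s - τ * wt s| ≤ Mtt * τ * τ := by
  have hsub : Icc s (s + τ) ⊆ Icc 0 T := Icc_subset_Icc hs hsT
  have l : s ∈ Icc s (s + τ) := ⟨le_rfl, by linarith⟩
  have r : s + τ ∈ Icc s (s + τ) := ⟨by linarith, le_rfl⟩
  have hM0 : 0 ≤ Mtt := (abs_nonneg _).trans (hM s (hsub l))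
  have hd : ∀ t ∈ Icc s (s + τ), ‖wt t - wt s‖ ≤ Mtt * τ := by
    intro t ht
    refine ((convex_Icc s (s + τ)).norm_image_sub_le_of_norm_hasDerivWithin_le (C := Mtt)
      (fun y hy => (h2 y (hsub hy)).mono hsub) (fun y hy => hM y (hsub hy)) l ht).trans ?_
    rw [Real.norm_of_nonneg (by linarith [ht.1])]
    exact mul_le_mul_of_nonneg_left (by linarith [ht.2]) hM0
  have := (convex_Icc s (s + τ)).norm_image_sub_le_of_norm_hasDerivWithin_le (C := Mtt * τ)
    (f := fun t => w t - t * wt s) (f' := fun t => wt t - wt s)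
    (fun y hy => by
      have := ((h1 y (hsub hy)).mono hsub).sub ((hasDerivWithinAt_id y _).mul_const (wt s))
      rw [one_mul] at this
      exact this) hd l r
  rw [show s + τ - s = τ by ring, Real.norm_of_nonneg hτ, Real.norm_eq_abs] at this
  convert this using 2
  ring

lemma gridPt_add (N : ℕ) (h : ℝ) (i j : Fin N → ℤ) :
    gridPt N h (i + j) = gridPt N h i + gridPt N h j := by
  ext k; simp [gridPt, mul_add]

/-- second-order convergence rate of the explicit scheme for smooth
solutions: `sup_i |U^n_i − u(h i, nτ)| ≤ nτ L_F (N/10)(M₄ + ((2−σ)/(2+σ)) c_N M₀) h²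
+ nτ M_tt τ`. -/
theorem stmt_15 (N : ℕ) (hN : 1 ≤ N) (σ : ℝ) (hσ : σ ∈ Set.Ioo (0 : ℝ) 2)
    (h τ T : ℝ) (hh : 0 < h) (hτ : 0 < τ) (hT : 0 < T)
    (F : ℝ → ℝ) (LF : ℝ) (hLF : 0 < LF)
    (hF : ∀ l₁ l₂ : ℝ, F l₁ - F l₂ ≤ LF * max (l₁ - l₂) 0)
    (hCFL : τ * LF * (∑' j : {j : Fin N → ℤ // j ≠ 0}, kappa N σ h j.1) ≤ 1)
    (f : (Fin N → ℝ) → ℝ → ℝ)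
    (u ut utt : (Fin N → ℝ) → ℝ → ℝ) (M0 M4 Mtt : ℝ)
    (hM0 : ∀ x, ∀ t ∈ Set.Icc (0 : ℝ) T, |u x t| ≤ M0)
    (hux : ∀ t ∈ Set.Icc (0 : ℝ) T, ContDiff ℝ 4 fun x => u x t)
    (huxb : ∀ n : ℕ, n ≤ 4 → ∃ C : ℝ, ∀ x, ∀ t ∈ Set.Icc (0 : ℝ) T,
      ‖iteratedFDeriv ℝ n (fun x => u x t) x‖ ≤ C)
    (hM4 : ∀ (k : Fin N) (x : Fin N → ℝ), ∀ t ∈ Set.Icc (0 : ℝ) T,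
      |iteratedFDeriv ℝ 4 (fun x => u x t) x (fun _ => Pi.single k 1)| ≤ M4)
    (hut : ∀ x, ∀ t ∈ Set.Icc (0 : ℝ) T,
      HasDerivWithinAt (u x) (ut x t) (Set.Icc 0 T) t)
    (hutt : ∀ x, ∀ t ∈ Set.Icc (0 : ℝ) T,
      HasDerivWithinAt (ut x) (utt x t) (Set.Icc 0 T) t)
    (hMtt : ∀ x, ∀ t ∈ Set.Icc (0 : ℝ) T, |utt x t| ≤ Mtt)
    (heq : ∀ x, ∀ t ∈ Set.Icc (0 : ℝ) T,
      ut x t = F (fracLap N σ (fun y => u y t) x) + f x t)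
    (U : ℕ → (Fin N → ℤ) → ℝ)
    (hU0 : ∀ i, U 0 i = u (gridPt N h i) 0)
    (hUrec : ∀ n i, U (n + 1) i = U n i
      + τ * (F (∑' j : {j : Fin N → ℤ // j ≠ 0}, (U n (i + j.1) - U n i) * kappa N σ h j.1)
              + f (gridPt N h i) ((n : ℝ) * τ))) :
    ∀ n : ℕ, (n : ℝ) * τ ≤ T → ∀ i,
      |U n i - u (gridPt N h i) ((n : ℝ) * τ)|
        ≤ ((n : ℝ) * τ) * LF * ((N : ℝ) / 10) * (M4 + ((2 - σ) / (2 + σ)) * cN N * M0) * h ^ 2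
          + ((n : ℝ) * τ) * Mtt * τ := by
  have hC : ∃ C : ℝ, ∀ k ≤ 4, ∀ x, ∀ t ∈ Set.Icc (0 : ℝ) T,
      ‖iteratedFDeriv ℝ k (fun x => u x t) x‖ ≤ C := by
    choose! C hC using huxb
    refine ⟨∑ k ∈ Finset.range 5, |C k|, fun k hk x t ht => ?_⟩
    exact ((hC k hk x t ht).trans (le_abs_self _)).trans
      (Finset.single_le_sum (f := fun k => |C k|) (fun _ _ => abs_nonneg _)
        (Finset.mem_range.2 (by omega)))
  obtain ⟨C, hC⟩ := hC
  have hk := summable_kappa (N := N) hσ hh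
  have hk0 : ∀ j : {j : Fin N → ℤ // j ≠ 0}, 0 ≤ kappa N σ h j.1 := fun j => kappa_nonneg hh j.1
  intro n
  induction n with
  | zero => intro _ i; simp [hU0]
  | succ n ih =>
    intro hn i
    have hn1 : (n : ℝ) * τ + τ ≤ T := by push_cast at hn; linarith
    have hs0 : 0 ≤ (n : ℝ) * τ := by positivity
    have hnT : (n : ℝ) * τ ≤ T := by linarith
    have ht : (n : ℝ) * τ ∈ Set.Icc (0 : ℝ) T := ⟨hs0, hnT⟩
    have ih := ih hnT
    rw [show ((n + 1 : ℕ) : ℝ) * τ = (n : ℝ) * τ + τ by push_cast; ring]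
    set s : ℝ := (n : ℝ) * τ with hs
    set E : ℝ := s * LF * ((N : ℝ) / 10) * (M4 + ((2 - σ) / (2 + σ)) * cN N * M0) * h ^ 2
          + s * Mtt * τ with hE
    set K : ℝ := (N : ℝ) / 10 * (M4 + ((2 - σ) / (2 + σ)) * cN N * M0) * h ^ 2 with hK
    have hcons := consistency hN (hux s ht) (fun k hk x => hC k hk x s ht)
      (fun x => hM0 x s ht) (fun k x => hM4 k x s ht) hσ hh (gridPt N h i)
    have heul := euler_step hs0 hτ.le hn1 (hut (gridPt N h i)) (hutt (gridPt N h i))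
      (hMtt (gridPt N h i))
    rw [heq _ s ht] at heul
    -- splitting the discrete operator on `U` into its values on the error and on `u`
    have hsplit : (∑' j : {j : Fin N → ℤ // j ≠ 0}, (U n (i + j.1) - U n i) * kappa N σ h j.1) =
        (∑' j : {j : Fin N → ℤ // j ≠ 0}, ((U n (i + j.1) - u (gridPt N h (i + j.1)) s)
          - (U n i - u (gridPt N h i) s)) * kappa N σ h j.1) +
        ((∑' j : {j : Fin N → ℤ // j ≠ 0}, (u (gridPt N h i + gridPt N h j.1) s
          - u (gridPt N h i) s) * kappa N σ h j.1)
          - fracLap N σ (fun y => u y s) (gridPt N h i)) +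
        fracLap N σ (fun y => u y s) (gridPt N h i) := by
      rw [add_assoc, sub_add_cancel, ← Summable.tsum_add]
      · exact tsum_congr fun j => by rw [gridPt_add]; ring
      · exact summable_mul_bdd (C := E + E) hk hk0 fun j =>
          (abs_sub _ _).trans (add_le_add (ih _) (ih _))
      · exact summable_mul_bdd (C := M0 + M0) hk hk0 fun j =>
          (abs_sub _ _).trans (add_le_add (hM0 _ s ht) (hM0 _ s ht))
    have hstep := monotone_step hk hk0 hτ hLF hCFL hF (ih i) (fun j => ih (i + j.1)) hsplit hcons
    rw [hUrec]
    obtain ⟨a1, a2⟩ := abs_le.1 hstep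
    obtain ⟨b1, b2⟩ := abs_le.1 heul
    have hgoal : (s + τ) * LF * ((N : ℝ) / 10) * (M4 + ((2 - σ) / (2 + σ)) * cN N * M0) * h ^ 2
        + (s + τ) * Mtt * τ = E + τ * LF * K + Mtt * τ * τ := by rw [hE, hK]; ring
    rw [hgoal, abs_le]
    constructor <;> linarith
end

section
/- (Comparison principle for the Lax–Friedrichs scheme with convection.) Let N ≥ 1, h > 0, let (κ_j)_{j∈ℤ^N\{0}} be nonnegative summable weights with total mass S_κ, let F satisfy assumption (A1) with constant L_F > 0, and let H : ℝ^N → ℝ and constants L¹,…,L^N ≥ 0 satisfy |H(p) − H(q)| ≤ ∑_{k=1}^N 2L^k·|p_k − q_k| for all p, q ∈ ℝ^N. Let τ > 0 satisfy the CFL condition τ·( 2h^{-1}∑_{k=1}^N L^k + L_F·S_κ ) ≤ 1, and let f : ℤ^N × ℕ → ℝ. Suppose (U^n)_{n≥0} and (V^n)_{n≥0} are families of bounded grid functions ℤ^N → ℝ satisfying, for all i and n, U^{n+1}_i ≤ U^n_i + τ·[ F((L U^n)_i) − H(D^c U^n_i) + h·(Δ^H U^n)_i + f^n_i ] and the reverse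 inequality (with ≥) for V. If U^0_i ≤ V^0_i for all i ∈ ℤ^N, then U^n_i ≤ V^n_i for all n ≥ 0 and all i ∈ ℤ^N. -/
/-!
One step of the scheme is monotone. Suppose `u ≤ v` and put `W = u - v ≤ 0`. By (A1) the nonlocal
part changes by at most `LF * (-W_i) * S`, where `S` is the total mass of the weights, because every
term `W_{i+j} κ_j` is nonpositive (`Lop_sub_le`). The variation of `H` is at most
`∑ L^k |W_{i+e_k} - W_{i-e_k}| / h`, and the viscosity absorbs it: as
`|a - b| + a + b = 2 max a b ≤ 0` for `a, b ≤ 0`, only the diagonal contribution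
`2 h⁻¹ (∑ L^k) (-W_i)` survives (`convection_le`). Hence the new difference is at most
`W_i (1 - τ (2 h⁻¹ ∑ L^k + LF S))`, which is nonpositive under the CFL condition. Induction on the
time level concludes.
-/

open MeasureTheory Real Set

/-- The nonlocal operator `(L V)_i = ∑_{j≠0} (V_{i+j} − V_i) κ_j` on grid functions. -/
noncomputable def Lop (N : ℕ) (κ : (Fin N → ℤ) → ℝ) (V : (Fin N → ℤ) → ℝ)
    (i : Fin N → ℤ) : ℝ :=
  ∑' j : {j : Fin N → ℤ // j ≠ 0}, (V (i + j.1) - V i) * κ j.1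

/-- The central difference gradient `(D^c V)_i ∈ ℝ^N`. -/
noncomputable def Dc (N : ℕ) (h : ℝ) (V : (Fin N → ℤ) → ℝ) (i : Fin N → ℤ) : Fin N → ℝ :=
  fun k => (V (i + (Pi.single k 1 : Fin N → ℤ)) - V (i - (Pi.single k 1 : Fin N → ℤ))) / (2 * h)

/-- The numerical viscosity term `(Δ^H V)_i = ∑_k L^k (V_{i+e_k} − 2V_i + V_{i−e_k})/h²`. -/
noncomputable def viscH (N : ℕ) (h : ℝ) (L : Fin N → ℝ) (V : (Fin N → ℤ) → ℝ)
    (i : Fin N → ℤ) : ℝ :=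
  ∑ k : Fin N, L k *
    (V (i + (Pi.single k 1 : Fin N → ℤ)) - 2 * V i + V (i - (Pi.single k 1 : Fin N → ℤ))) / h ^ 2

/-- Boundedness makes the series defining `Lop` convergent, so that it is not a junk value. -/
lemma summable_Lop {N : ℕ} {κ : (Fin N → ℤ) → ℝ} (hκ : ∀ j, 0 ≤ κ j)
    (hsum : Summable fun j : {j : Fin N → ℤ // j ≠ 0} => κ j.1)
    {u : (Fin N → ℤ) → ℝ} (hu : ∃ C : ℝ, ∀ i, |u i| ≤ C) (i : Fin N → ℤ) :
    Summable fun j : {j : Fin N → ℤ // j ≠ 0} => (u (i + j.1) - u i) * κ j.1 := by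
  obtain ⟨C, hC⟩ := hu
  refine Summable.of_norm_bounded (hsum.mul_left (2 * C)) fun j => ?_
  rw [Real.norm_eq_abs, abs_mul, abs_of_nonneg (hκ j.1)]
  refine mul_le_mul_of_nonneg_right ?_ (hκ j.1)
  have h1 := abs_sub (u (i + j.1)) (u i)
  linarith [hC (i + j.1), hC i]

lemma Lop_sub_le {N : ℕ} {κ : (Fin N → ℤ) → ℝ} (hκ : ∀ j, 0 ≤ κ j)
    (hsum : Summable fun j : {j : Fin N → ℤ // j ≠ 0} => κ j.1)
    {u v : (Fin N → ℤ) → ℝ} (hu : ∃ C : ℝ, ∀ i, |u i| ≤ C) (hv : ∃ C : ℝ, ∀ i, |v i| ≤ C)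
    (huv : ∀ i, u i ≤ v i) (i : Fin N → ℤ) :
    Lop N κ u i - Lop N κ v i
      ≤ (v i - u i) * ∑' j : {j : Fin N → ℤ // j ≠ 0}, κ j.1 := by
  have su := summable_Lop hκ hsum hu i
  have sv := summable_Lop hκ hsum hv i
  unfold Lop
  rw [← su.tsum_sub sv, ← tsum_mul_left]
  refine (su.sub sv).tsum_le_tsum (fun j => ?_) (hsum.mul_left _)
  have := mul_nonneg (sub_nonneg.2 (huv (i + j.1))) (hκ j.1)
  linarith

/-- The numerical viscosity dominates the variation of the Hamiltonian, up to the diagonal term. -/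
lemma convection_le {N : ℕ} {h : ℝ} (hh : 0 < h) {H : (Fin N → ℝ) → ℝ} {L : Fin N → ℝ}
    (hL : ∀ k, 0 ≤ L k)
    (hH : ∀ p q : Fin N → ℝ, |H p - H q| ≤ ∑ k : Fin N, 2 * L k * |p k - q k|)
    {u v : (Fin N → ℤ) → ℝ} (huv : ∀ i, u i ≤ v i) (i : Fin N → ℤ) :
    (-H (Dc N h u i) + h * viscH N h L u i) - (-H (Dc N h v i) + h * viscH N h L v i)
      ≤ 2 * h⁻¹ * (∑ k : Fin N, L k) * (v i - u i) := by
  have h1 : H (Dc N h v i) - H (Dc N h u i)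
      ≤ ∑ k : Fin N, 2 * L k * |Dc N h v i k - Dc N h u i k| :=
    (le_abs_self _).trans (hH _ _)
  have h2 : (∑ k : Fin N, 2 * L k * |Dc N h v i k - Dc N h u i k|)
      + h * viscH N h L u i - h * viscH N h L v i
      ≤ 2 * h⁻¹ * (∑ k : Fin N, L k) * (v i - u i) := by
    unfold viscH
    rw [Finset.mul_sum, Finset.mul_sum, Finset.mul_sum, Finset.sum_mul,
      ← Finset.sum_add_distrib, ← Finset.sum_sub_distrib]
    refine Finset.sum_le_sum fun k _ => ?_
    have ha := huv (i + (Pi.single k 1 : Fin N → ℤ))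
    have hb := huv (i - (Pi.single k 1 : Fin N → ℤ))
    unfold Dc
    generalize u (i + (Pi.single k 1 : Fin N → ℤ)) = up at *
    generalize u (i - (Pi.single k 1 : Fin N → ℤ)) = um at *
    generalize v (i + (Pi.single k 1 : Fin N → ℤ)) = vp at *
    generalize v (i - (Pi.single k 1 : Fin N → ℤ)) = vm at *
    have e1 : |(vp - vm) / (2 * h) - (up - um) / (2 * h)|
        = |(vp - up) - (vm - um)| / (2 * h) := by
      rw [← abs_of_pos (show 0 < 2 * h by positivity), ← abs_div,
        abs_of_pos (show 0 < 2 * h by positivity)]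
      congr 1
      ring
    have e2 : |(vp - up) - (vm - um)| ≤ (vp - up) + (vm - um) := by
      rw [abs_le]
      constructor <;> linarith
    have e3 := mul_le_mul_of_nonneg_left e2 (div_nonneg (hL k) hh.le)
    rw [e1]
    have e4 : 2 * L k * (|(vp - up) - (vm - um)| / (2 * h))
        + h * (L k * (up - 2 * u i + um) / h ^ 2) - h * (L k * (vp - 2 * v i + vm) / h ^ 2)
        = L k / h * |(vp - up) - (vm - um)| - L k / h * ((vp - up) + (vm - um))
          + 2 * h⁻¹ * L k * (v i - u i) := by
      field_simp
      ring
    linarith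
  linarith

/-- comparison principle for the Lax–Friedrichs scheme with convection:
under assumption (A1), the Lipschitz bound on `H`, and the CFL condition
`τ (2 h⁻¹ ∑_k L^k + L_F S_κ) ≤ 1`, bounded sub- and supersolutions are ordered whenever
their initial data are. -/
theorem stmt_17 (N : ℕ) (hN : 1 ≤ N) (h : ℝ) (hh : 0 < h)
    (κ : (Fin N → ℤ) → ℝ) (hκ : ∀ j, 0 ≤ κ j)
    (hsum : Summable fun j : {j : Fin N → ℤ // j ≠ 0} => κ j.1)
    (F : ℝ → ℝ) (LF : ℝ) (hLF : 0 < LF)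
    (hF : ∀ l₁ l₂ : ℝ, F l₁ - F l₂ ≤ LF * max (l₁ - l₂) 0)
    (H : (Fin N → ℝ) → ℝ) (L : Fin N → ℝ) (hL : ∀ k, 0 ≤ L k)
    (hH : ∀ p q : Fin N → ℝ, |H p - H q| ≤ ∑ k : Fin N, 2 * L k * |p k - q k|)
    (τ : ℝ) (hτ : 0 < τ)
    (hCFL : τ * (2 * h⁻¹ * (∑ k : Fin N, L k)
        + LF * (∑' j : {j : Fin N → ℤ // j ≠ 0}, κ j.1)) ≤ 1)
    (f : (Fin N → ℤ) → ℕ → ℝ)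
    (U V : ℕ → (Fin N → ℤ) → ℝ)
    (hUb : ∀ n, ∃ C : ℝ, ∀ i, |U n i| ≤ C)
    (hVb : ∀ n, ∃ C : ℝ, ∀ i, |V n i| ≤ C)
    (hU : ∀ n i, U (n + 1) i ≤ U n i
      + τ * (F (Lop N κ (U n) i) - H (Dc N h (U n) i) + h * viscH N h L (U n) i + f i n))
    (hV : ∀ n i, V n i
      + τ * (F (Lop N κ (V n) i) - H (Dc N h (V n) i) + h * viscH N h L (V n) i + f i n)
        ≤ V (n + 1) i)
    (h0 : ∀ i, U 0 i ≤ V 0 i) :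
    ∀ n i, U n i ≤ V n i := by
  intro n
  induction n with
  | zero => exact h0
  | succ n ih =>
    intro i
    have hW : 0 ≤ V n i - U n i := sub_nonneg.2 (ih i)
    have a1 := Lop_sub_le hκ hsum (hUb n) (hVb n) ih i
    have a2 := convection_le hh hL hH ih i
    set S := ∑' j : {j : Fin N → ℤ // j ≠ 0}, κ j.1
    have hS : 0 ≤ S := tsum_nonneg fun j => hκ j.1
    have a3 : F (Lop N κ (U n) i) - F (Lop N κ (V n) i) ≤ LF * ((V n i - U n i) * S) :=
      (hF _ _).trans (mul_le_mul_of_nonneg_left (max_le a1 (mul_nonneg hW hS)) hLF.le)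
    have a4 := mul_le_mul_of_nonneg_left (add_le_add a3 a2) hτ.le
    have a5 := mul_le_mul_of_nonneg_right hCFL hW
    linarith [hU n i, hV n i]
end

section
/- (L∞-stability of the explicit scheme for the HJB/Isaacs equation.) Let N ≥ 1, h > 0, let (κ_j)_{j∈ℤ^N\{0}} be nonnegative summable weights with total mass S_κ, and let A, B be nonempty sets. Let a, c : A × B × ℤ^N × ℕ → [0,∞), b = (b_1,…,b_N) : A × B × ℤ^N × ℕ → ℝ^N, and f : A × B × ℤ^N × ℕ → ℝ be uniformly bounded, and let τ > 0 satisfy, for all α ∈ A, β ∈ B, i ∈ ℤ^N, n ∈ ℕ, the CFL condition τ·( h^{-1}∑_{k=1}^N |b_k^{α,β}(i,n)| + a^{α,β}(i,n)·S_κ + c^{α,β}(i,n) ) ≤ 1. Let u₀ : ℤ^N → ℝ be bounded and define U recursively by U^0_i = u₀(i) and U^{n+1}_i = U^n_i + τ·inf_{β∈B} sup_{α∈A} { f^{α,β}(i,n) − c^{α,β}(i,n)·U^n_i + a^{α,β}(i,n)·(L U^n)_i + ∑_{k=1}^N [ b_k^{α,β}(i,n)⁺·(U^n_{i+e_k} −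 U^n_i)/h + (−b_k^{α,β}(i,n))⁺·(U^n_{i−e_k} − U^n_i)/h ] }. Then each U^n is bounded and sup_{i∈ℤ^N} |U^n_i| ≤ sup_i |u₀(i)| + n·τ·sup_{α,β,i,m} |f^{α,β}(i,m)| for every n ≥ 0. -/
/-!
The scheme is monotone under the CFL condition. If `|U n| ≤ M` everywhere, each increment
`U n (i + j) - U n i` is at most `M - U n i`, so the jump and upwind drift terms are at most
`(a S + h⁻¹ ∑ |b_k|) (M - U n i)` (`Lop_le`, `drift_le`). Since the total weight times `τ` is at
most `1`, one explicit step with frozen controls stays below `M + τ sup |f|` (`step_le`). The lower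
bound is the same statement for `-U n` and `-f`. Both bounds are uniform in the controls, hence
pass to the inf-sup (`iInf_iSup_mem`), and induction on `n` concludes.
-/

open MeasureTheory Real Set

/-- A function of two controls with values in `[l, u]` has its inf-sup in `[l, u]`; the uniform
bounds ensure that the real infimum and supremum are not junk values. -/
lemma iInf_iSup_mem {A B : Type*} [Nonempty A] [Nonempty B] (H : A → B → ℝ) {l u : ℝ}
    (hl : ∀ α β, l ≤ H α β) (hu : ∀ α β, H α β ≤ u) :
    l ≤ ⨅ β, ⨆ α, H α β ∧ ⨅ β, ⨆ α, H α β ≤ u := by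
  have hsup : ∀ β, l ≤ ⨆ α, H α β := fun β =>
    (hl (Classical.arbitrary A) β).trans
      (le_ciSup (f := fun α => H α β) ⟨u, by rintro _ ⟨α, rfl⟩; exact hu α β⟩ _)
  refine ⟨le_ciInf hsup, ?_⟩
  exact (ciInf_le ⟨l, by rintro _ ⟨β, rfl⟩; exact hsup β⟩ (Classical.arbitrary B)).trans
    (ciSup_le fun α => hu α _)

lemma Lop_neg (N : ℕ) (κ V : (Fin N → ℤ) → ℝ) (i : Fin N → ℤ) :
    Lop N κ (fun j => -V j) i = -Lop N κ V i := by
  unfold Lop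
  rw [← tsum_neg]
  exact tsum_congr fun j => by ring

lemma Lop_le (N : ℕ) (κ V : (Fin N → ℤ) → ℝ) (hκ : ∀ j, 0 ≤ κ j)
    (hsum : Summable fun j : {j : Fin N → ℤ // j ≠ 0} => κ j.1) {M : ℝ}
    (hV : ∀ i, |V i| ≤ M) (i : Fin N → ℤ) :
    Lop N κ V i ≤ (∑' j : {j : Fin N → ℤ // j ≠ 0}, κ j.1) * (M - V i) := by
  unfold Lop
  rw [mul_comm, ← tsum_mul_left]
  refine Summable.tsum_le_tsum (fun j => ?_) ?_ (hsum.mul_left _)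
  · exact mul_le_mul_of_nonneg_right (by linarith [(abs_le.1 (hV (i + j.1))).2]) (hκ _)
  · refine Summable.of_norm_bounded (hsum.mul_left (2 * M)) fun j => ?_
    rw [Real.norm_eq_abs, abs_mul, abs_of_nonneg (hκ _)]
    refine mul_le_mul_of_nonneg_right ?_ (hκ _)
    have h1 := abs_le.1 (hV (i + j.1))
    have h2 := abs_le.1 (hV i)
    exact abs_le.2 ⟨by linarith [h1.1, h2.2], by linarith [h1.2, h2.1]⟩

/-- In the upwind difference both weights are nonnegative and `b⁺ + (-b)⁺ = |b|`. -/
lemma drift_le {N : ℕ} {h : ℝ} (hh : 0 < h) (b p q : Fin N → ℝ) {v M : ℝ}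
    (hp : ∀ k, p k ≤ M) (hq : ∀ k, q k ≤ M) :
    ∑ k, (max (b k) 0 * (p k - v) / h + max (-(b k)) 0 * (q k - v) / h)
      ≤ h⁻¹ * (∑ k, |b k|) * (M - v) := by
  rw [Finset.mul_sum, Finset.sum_mul]
  refine Finset.sum_le_sum fun k _ => ?_
  have e : |b k| = max (b k) 0 + max (-(b k)) 0 := by
    rcases le_total 0 (b k) with hb | hb
    · rw [abs_of_nonneg hb, max_eq_left hb, max_eq_right (by linarith), add_zero]
    · rw [abs_of_nonpos hb, max_eq_right hb, max_eq_left (by linarith), zero_add]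
  have h1 := mul_le_mul_of_nonneg_left (sub_le_sub_right (hp k) v) (le_max_right (b k) 0)
  have h2 := mul_le_mul_of_nonneg_left (sub_le_sub_right (hq k) v) (le_max_right (-(b k)) 0)
  calc _ = h⁻¹ * (max (b k) 0 * (p k - v) + max (-(b k)) 0 * (q k - v)) := by
        rw [div_eq_inv_mul, div_eq_inv_mul]; ring
    _ ≤ h⁻¹ * (max (b k) 0 * (M - v) + max (-(b k)) 0 * (M - v)) :=
        mul_le_mul_of_nonneg_left (add_le_add h1 h2) (inv_pos.2 hh).le
    _ = _ := by rw [e]; ring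

/-- One explicit step at a grid point with frozen controls: `v` is the current value, `L` the
nonlocal term, `D` the drift term, and `S`, `P` the masses of their weights. -/
lemma step_le {τ f c a P S v L D M F : ℝ} (hτ : 0 < τ) (ha : 0 ≤ a) (hc : 0 ≤ c) (hM : 0 ≤ M)
    (hv : v ≤ M) (hf : f ≤ F) (hL : L ≤ S * (M - v)) (hD : D ≤ P * (M - v))
    (hCFL : τ * (P + a * S + c) ≤ 1) :
    v + τ * (f - c * v + a * L + D) ≤ M + τ * F := by
  have h1 : f - c * v + a * L + D ≤ F + (P + a * S + c) * (M - v) := by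
    have := mul_le_mul_of_nonneg_left hL ha
    nlinarith [mul_nonneg hc hM]
  have h2 := mul_le_mul_of_nonneg_left h1 hτ.le
  have h3 := mul_le_mul_of_nonneg_right hCFL (sub_nonneg.2 hv)
  nlinarith

/-- L∞-stability of the explicit scheme for the HJB/Isaacs equation:
under nonnegativity and uniform boundedness of the data and the CFL condition, the
iterates satisfy `sup_i |U^n_i| ≤ sup |u₀| + n τ sup |f|`. -/
theorem stmt_18 (N : ℕ) (hN : 1 ≤ N) (h : ℝ) (hh : 0 < h)
    (κ : (Fin N → ℤ) → ℝ) (hκ : ∀ j, 0 ≤ κ j)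
    (hsum : Summable fun j : {j : Fin N → ℤ // j ≠ 0} => κ j.1)
    (A B : Type*) [Nonempty A] [Nonempty B]
    (a c : A → B → (Fin N → ℤ) → ℕ → ℝ)
    (b : A → B → (Fin N → ℤ) → ℕ → Fin N → ℝ)
    (f : A → B → (Fin N → ℤ) → ℕ → ℝ)
    (ha : ∀ α β i n, 0 ≤ a α β i n) (hc : ∀ α β i n, 0 ≤ c α β i n)
    (Ca : ℝ) (hCa : ∀ α β i n, a α β i n ≤ Ca)
    (Cb : ℝ) (hCb : ∀ α β i n k, |b α β i n k| ≤ Cb)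
    (Cc : ℝ) (hCc : ∀ α β i n, c α β i n ≤ Cc)
    (Cf : ℝ) (hCf : ∀ α β i n, |f α β i n| ≤ Cf)
    (τ : ℝ) (hτ : 0 < τ)
    (hCFL : ∀ α β i n,
      τ * (h⁻¹ * (∑ k : Fin N, |b α β i n k|)
            + a α β i n * (∑' j : {j : Fin N → ℤ // j ≠ 0}, κ j.1)
            + c α β i n) ≤ 1)
    (u₀ : (Fin N → ℤ) → ℝ) (Cu : ℝ) (hCu : ∀ i, |u₀ i| ≤ Cu)
    (U : ℕ → (Fin N → ℤ) → ℝ)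
    (hU0 : ∀ i, U 0 i = u₀ i)
    (hUrec : ∀ n i, U (n + 1) i = U n i
      + τ * ⨅ β : B, ⨆ α : A,
          (f α β i n - c α β i n * U n i + a α β i n * Lop N κ (U n) i
            + ∑ k : Fin N,
                (max (b α β i n k) 0 * (U n (i + (Pi.single k 1 : Fin N → ℤ)) - U n i) / h
                  + max (-(b α β i n k)) 0
                      * (U n (i - (Pi.single k 1 : Fin N → ℤ)) - U n i) / h))) :
    ∀ n i, |U n i| ≤ Cu + (n : ℝ) * τ * Cf := by
  intro n
  induction n with
  | zero => intro i; simpa [hU0] using hCu i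
  | succ n ih =>
    intro i
    set M := Cu + (n : ℝ) * τ * Cf with hMdef
    have hM : 0 ≤ M := (abs_nonneg _).trans (ih i)
    have ihn : ∀ j, |(fun j => -U n j) j| ≤ M := fun j => by simpa using ih j
    rw [hUrec n i]
    obtain ⟨hl, hu⟩ := iInf_iSup_mem (l := (-(M + τ * Cf) - U n i) / τ)
      (u := (M + τ * Cf - U n i) / τ) (fun α β =>
          (f α β i n - c α β i n * U n i + a α β i n * Lop N κ (U n) i
            + ∑ k : Fin N,
                (max (b α β i n k) 0 * (U n (i + (Pi.single k 1 : Fin N → ℤ)) - U n i) / h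
                  + max (-(b α β i n k)) 0
                      * (U n (i - (Pi.single k 1 : Fin N → ℤ)) - U n i) / h)))
      (fun α β => by
        have hL := Lop_le N κ _ hκ hsum ihn i
        rw [Lop_neg] at hL
        have hD := drift_le hh (b α β i n) (fun k => -U n (i + (Pi.single k 1 : Fin N → ℤ)))
          (fun k => -U n (i - (Pi.single k 1 : Fin N → ℤ))) (v := -U n i) (M := M)
          (fun k => (neg_le_abs _).trans (ih _)) (fun k => (neg_le_abs _).trans (ih _))
        have key := step_le hτ (ha α β i n) (hc α β i n) hM ((neg_le_abs _).trans (ih i))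
          ((neg_le_abs _).trans (hCf α β i n)) hL hD (hCFL α β i n)
        -- The drift term is odd in the grid function.
        have e : ∑ k : Fin N,
            (max (b α β i n k) 0 * (-U n (i + (Pi.single k 1 : Fin N → ℤ)) - -U n i) / h
              + max (-(b α β i n k)) 0
                  * (-U n (i - (Pi.single k 1 : Fin N → ℤ)) - -U n i) / h)
            = -∑ k : Fin N,
            (max (b α β i n k) 0 * (U n (i + (Pi.single k 1 : Fin N → ℤ)) - U n i) / h
              + max (-(b α β i n k)) 0
                  * (U n (i - (Pi.single k 1 : Fin N → ℤ)) - U n i) / h) := by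
          rw [← Finset.sum_neg_distrib]
          exact Finset.sum_congr rfl fun k _ => by ring
        rw [e] at key
        rw [div_le_iff₀ hτ]
        linarith)
      (fun α β => by
        have key := step_le hτ (ha α β i n) (hc α β i n) hM ((le_abs_self _).trans (ih i))
          ((le_abs_self _).trans (hCf α β i n)) (Lop_le N κ _ hκ hsum ih i)
          (drift_le hh (b α β i n) (fun k => U n (i + (Pi.single k 1 : Fin N → ℤ)))
            (fun k => U n (i - (Pi.single k 1 : Fin N → ℤ))) (v := U n i) (M := M)
            (fun k => (le_abs_self _).trans (ih _)) (fun k => (le_abs_self _).trans (ih _)))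
          (hCFL α β i n)
        rw [le_div_iff₀ hτ]
        linarith)
    rw [div_le_iff₀ hτ] at hl
    rw [le_div_iff₀ hτ] at hu
    have e : Cu + ((n + 1 : ℕ) : ℝ) * τ * Cf = M + τ * Cf := by
      rw [hMdef]; push_cast; ring
    rw [e]
    exact abs_le.2 ⟨by linarith, by linarith⟩
end
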